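/- Let Ω, ω and the eigenfunction u with eigenvalue λ be as in the context, and let μ be the smallest positive Neumann eigenvalue of the one-dimensional problem −(ω(x)φ'(x))' = μ ω(x) φ(x) on (0,1), characterized variationally as μ = inf{∫₀¹ ω (g')² dx / ∫₀¹ ω g² dx : g Lipschitz on [0,1], g ≠ 0, ∫₀¹ ω g dx = 0}. Then λ ≤ μ ≤ λ + Cε for a constant C depending only on n. -/

import Mathlib

open MeasureTheory Set Filter Topology RealInnerProductSpace

noncomputable section

/-- The point `(x, y) ∈ ℝ × ℝ^m ≅ ℝ^{m+1}`. -/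
def mkPt (m : ℕ) (x : ℝ) (y : EuclideanSpace ℝ (Fin m)) : EuclideanSpace ℝ (Fin (m+1)) :=
  (EuclideanSpace.equiv (Fin (m+1)) ℝ).symm (Fin.cons x ((EuclideanSpace.equiv (Fin m) ℝ) y))

/-- The cross-section `Ω(s) = {y : (s, y) ∈ Ω}`. -/
def cross {m : ℕ} (Ω : Set (EuclideanSpace ℝ (Fin (m+1)))) (s : ℝ) :
    Set (EuclideanSpace ℝ (Fin m)) := {y | mkPt m s y ∈ Ω}

/-- `ω(s)`: the (n-1)-dimensional volume of the cross-section `Ω(s)`. -/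
def ωvol {m : ℕ} (Ω : Set (EuclideanSpace ℝ (Fin (m+1)))) (s : ℝ) : ℝ :=
  (volume (cross Ω s)).toReal

/-- The Laplacian, as the sum of the pure second derivatives along the standard basis. -/
def lap {k : ℕ} (u : EuclideanSpace ℝ (Fin k) → ℝ) (p : EuclideanSpace ℝ (Fin k)) : ℝ :=
  ∑ i, fderiv ℝ (fun q => fderiv ℝ u q (EuclideanSpace.single i 1)) p (EuclideanSpace.single i 1)

/-- The cross-sectional average `ū(x)` of `u`. -/
def ubarFn {m : ℕ} (Ω : Set (EuclideanSpace ℝ (Fin (m+1))))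
    (u : EuclideanSpace ℝ (Fin (m+1)) → ℝ) (x : ℝ) : ℝ :=
  (∫ y in cross Ω x, u (mkPt m x y)) / ωvol Ω x

/-!
For `λ ≤ μ`, a competitor `g` on `[0, 1]` pulls back to `(x, y) ↦ g x`, which has the same Rayleigh
quotient on `Ω`. Competitors for `λ` are smooth while those for `μ` are only Lipschitz, so `g'` is
mollified first.

For `μ ≤ λ + Cε`, the competitor is the cross-sectional average `ū`, made constant within `ε` of
either end. Its derivative is not the average of `∂ₓu`, because the cross-section moves. Let `p` be
a point of `closure Ω` with first coordinate `0`. The homothety `z ↦ p + τ (z - p)` maps `Ω(s)` into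
`Ω(τs)`, and for `τ` near `1` convexity bounds the fraction of `Ω(τs)` it misses by
`m (1 - τ) / (1 - s)`. Differentiating at `τ = 1`, `s ū'(s)` differs from the average of
`⟨∇u, z - p⟩` over `Ω(s)` by at most the oscillation of `u` across the slice times `m / (1 - s)`.
The oscillation is `O(ε)` times the gradient bound, which is proportional to `1 - s` near the right
end.
-/

section Mollification

open scoped Convolution

lemma abs_convolution_le_of_abs_le {ρ f : ℝ → ℝ} (hρ : Integrable ρ)
    (hρ0 : ∀ x, 0 ≤ ρ x) (hρ1 : ∫ x, ρ x = 1) {C : ℝ} (hf : ∀ x, |f x| ≤ C) (x : ℝ) :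
    |(ρ ⋆[ContinuousLinearMap.lsmul ℝ ℝ] f) x| ≤ C := by
  calc |(ρ ⋆[ContinuousLinearMap.lsmul ℝ ℝ] f) x|
      ≤ ∫ t, ρ t * C := by
        rw [convolution_def, ← Real.norm_eq_abs]
        refine norm_integral_le_of_norm_le (hρ.mul_const C) (Eventually.of_forall fun t => ?_)
        simp only [ContinuousLinearMap.lsmul_apply, smul_eq_mul, norm_mul, Real.norm_eq_abs,
          abs_of_nonneg (hρ0 t)]
        exact mul_le_mul_of_nonneg_left (hf _) (hρ0 t)
    _ = C := by rw [integral_mul_const, hρ1, one_mul]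

lemma exists_contDiff_tendsto_ae_of_abs_le {f : ℝ → ℝ} (hfm : Measurable f) {C : ℝ}
    (hf : ∀ x, |f x| ≤ C) :
    ∃ F : ℕ → ℝ → ℝ, (∀ k, ContDiff ℝ (⊤ : ℕ∞) (F k)) ∧ (∀ k x, |F k x| ≤ C) ∧
      ∀ᵐ x, Tendsto (fun k => F k x) atTop (𝓝 (f x)) := by
  let φ : ℕ → ContDiffBump (0 : ℝ) := fun k =>
    ⟨(1 / 2) * (1 / (k + 1)), 1 / (k + 1), by positivity,
      mul_lt_of_lt_one_left (by positivity) (by norm_num)⟩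
  have hloc : LocallyIntegrable f :=
    (locallyIntegrable_const C).mono hfm.aestronglyMeasurable
      (Eventually.of_forall fun x => (hf x).trans (le_abs_self C))
  refine ⟨fun k => (φ k).normed volume ⋆[ContinuousLinearMap.lsmul ℝ ℝ] f, fun k => ?_,
    fun k => ?_, ?_⟩
  · exact (φ k).hasCompactSupport_normed.contDiff_convolution_left
      (ContinuousLinearMap.lsmul ℝ ℝ) (φ k).contDiff_normed hloc
  · exact abs_convolution_le_of_abs_le (φ k).integrable_normed
      (fun x => (φ k).nonneg_normed x) (φ k).integral_normed hf
  · refine ContDiffBump.ae_convolution_tendsto_right_of_locallyIntegrable (K := 2)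
      tendsto_one_div_add_atTop_nhds_zero_nat (Eventually.of_forall fun k => ?_) hloc
    exact le_of_eq (by simp only [φ]; ring)

lemma contDiff_integral_of_contDiff {f : ℝ → ℝ} (hf : ContDiff ℝ (⊤ : ℕ∞) f) (a : ℝ) :
    ContDiff ℝ (⊤ : ℕ∞) fun x => ∫ t in a..x, f t := by
  have hderiv : ∀ x, HasDerivAt (fun x => ∫ t in a..x, f t) (f x) x := fun x =>
    hf.continuous.integral_hasStrictDerivAt a x |>.hasDerivAt
  rw [contDiff_infty_iff_deriv, funext fun x => (hderiv x).deriv]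
  exact ⟨fun x => (hderiv x).differentiableAt, hf⟩

lemma exists_contDiff_tendsto_of_lipschitzWith {g : ℝ → ℝ} {K : NNReal}
    (hg : LipschitzWith K g) :
    ∃ P : ℕ → ℝ → ℝ, (∀ k, ContDiff ℝ (⊤ : ℕ∞) (P k)) ∧ (∀ k, LipschitzWith K (P k)) ∧
      (∀ k, P k 0 = g 0) ∧ (∀ x, Tendsto (fun k => P k x) atTop (𝓝 (g x))) ∧
      ∀ᵐ x, Tendsto (fun k => deriv (P k) x) atTop (𝓝 (deriv g x)) := by
  obtain ⟨F, hF, hFK, hFlim⟩ := exists_contDiff_tendsto_ae_of_abs_le (measurable_deriv g)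
    (C := K) fun x => norm_deriv_le_of_lipschitz hg
  have hderiv : ∀ k x, HasDerivAt (fun x => g 0 + ∫ t in (0 : ℝ)..x, F k t) (F k x) x :=
    fun k x => ((hF k).continuous.integral_hasStrictDerivAt 0 x).hasDerivAt.const_add _
  refine ⟨fun k x => g 0 + ∫ t in (0 : ℝ)..x, F k t, fun k => ?_, fun k => ?_, fun k => ?_,
    fun x => ?_, ?_⟩
  · exact contDiff_const.add (contDiff_integral_of_contDiff (hF k) 0)
  · refine lipschitzWith_of_nnnorm_deriv_le (fun x => (hderiv k x).differentiableAt) fun x => ?_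
    rw [(hderiv k x).deriv]
    exact hFK k x
  · simp only [intervalIntegral.integral_same, add_zero]
  · have hFTC : g x = g 0 + ∫ t in (0 : ℝ)..x, deriv g t := by
      rw [hg.lipschitzOnWith.absolutelyContinuousOnInterval.integral_deriv_eq_sub,
        add_sub_cancel]
    rw [hFTC]
    refine tendsto_const_nhds.add
      (intervalIntegral.tendsto_integral_filter_of_dominated_convergence (fun _ => (K : ℝ))
        (Eventually.of_forall fun k => (hF k).continuous.aestronglyMeasurable)
        (Eventually.of_forall fun k => Eventually.of_forall fun t _ => hFK k t)
        intervalIntegrable_const (hFlim.mono fun t ht _ => ht))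
  · simpa only [(hderiv _ _).deriv] using hFlim

end Mollification

section WeightedPoincare

variable {ω g : ℝ → ℝ} {K : NNReal}

lemma tendsto_intervalIntegral_mul_of_bound {ι : Type*} {l : Filter ι}
    [l.IsCountablyGenerated] {f : ι → ℝ → ℝ} {f₀ : ℝ → ℝ} {a b C : ℝ}
    (hω : IntervalIntegrable ω volume a b) (hfm : ∀ k, Measurable (f k))
    (hfC : ∀ k, ∀ x ∈ uIoc a b, |f k x| ≤ C)
    (hlim : ∀ᵐ x, x ∈ uIoc a b → Tendsto (fun k => f k x) l (𝓝 (f₀ x))) :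
    Tendsto (fun k => ∫ x in a..b, ω x * f k x) l (𝓝 (∫ x in a..b, ω x * f₀ x)) := by
  refine intervalIntegral.tendsto_integral_filter_of_dominated_convergence (fun x => |ω x| * C)
    (Eventually.of_forall fun k => ?_) (Eventually.of_forall fun k => ?_)
    (hω.abs.mul_const C) ?_
  · exact hω.def'.aestronglyMeasurable.mul (hfm k).aestronglyMeasurable
  · refine Eventually.of_forall fun x hx => ?_
    rw [norm_mul, Real.norm_eq_abs, Real.norm_eq_abs]
    exact mul_le_mul_of_nonneg_left (hfC k x hx) (abs_nonneg _)
  · filter_upwards [hlim] with x hx hxab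
    exact (hx hxab).const_mul (ω x)

lemma exists_contDiff_tendsto_of_weighted_mean_zero (hω : IntervalIntegrable ω volume 0 1)
    (hω0 : ∫ x in (0 : ℝ)..1, ω x ≠ 0) (hg : LipschitzWith K g)
    (hg0 : ∫ x in (0 : ℝ)..1, ω x * g x = 0) :
    ∃ (P : ℕ → ℝ → ℝ) (C : ℝ), (∀ k, ContDiff ℝ (⊤ : ℕ∞) (P k)) ∧
      (∀ k, ∫ x in (0 : ℝ)..1, ω x * P k x = 0) ∧ (∀ k, ∀ x ∈ uIoc (0 : ℝ) 1, |P k x| ≤ C) ∧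
      (∀ k x, |deriv (P k) x| ≤ K) ∧ (∀ x, Tendsto (fun k => P k x) atTop (𝓝 (g x))) ∧
      ∀ᵐ x, Tendsto (fun k => deriv (P k) x) atTop (𝓝 (deriv g x)) := by
  obtain ⟨P, hP, hPK, hP0, hPlim, hP'lim⟩ := exists_contDiff_tendsto_of_lipschitzWith hg
  have hPb : ∀ k, ∀ x ∈ uIoc (0 : ℝ) 1, |P k x| ≤ |g 0| + K := fun k x hx => by
    rw [uIoc_of_le zero_le_one] at hx
    have hdist : |P k x - P k 0| ≤ K * |x - 0| := (hPK k).dist_le_mul x 0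
    have hx1 : K * |x - 0| ≤ K := mul_le_of_le_one_right K.2 (by
      rw [sub_zero, abs_of_pos hx.1]; exact hx.2)
    have := abs_sub_abs_le_abs_sub (P k x) (P k 0)
    rw [hP0 k] at this hdist
    linarith
  set c : ℕ → ℝ := fun k => (∫ x in (0 : ℝ)..1, ω x * P k x) / ∫ x in (0 : ℝ)..1, ω x with hc
  have hclim : Tendsto c atTop (𝓝 0) := by
    have := (tendsto_intervalIntegral_mul_of_bound (l := atTop) hω
      (fun k => (hP k).continuous.measurable) hPb
      (Eventually.of_forall fun x _ => hPlim x)).div_const (∫ x in (0 : ℝ)..1, ω x)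
    rwa [hg0, zero_div] at this
  obtain ⟨D, hD⟩ := isBounded_iff_forall_norm_le.1 (Metric.isBounded_range_of_tendsto c hclim)
  refine ⟨fun k x => P k x - c k, |g 0| + K + D, fun k => (hP k).sub contDiff_const,
    fun k => ?_, fun k x hx => ?_, fun k x => ?_, fun x => ?_, ?_⟩
  · simp only [mul_sub]
    rw [intervalIntegral.integral_sub (hω.mul_continuousOn (hP k).continuous.continuousOn)
      (hω.mul_const _), intervalIntegral.integral_mul_const, hc, mul_div_cancel₀ _ hω0, sub_self]
  · exact (abs_sub _ _).trans (add_le_add (hPb k x hx) (hD _ (mem_range_self k)))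
  · rw [deriv_sub_const]
    exact norm_deriv_le_of_lipschitz (hPK k)
  · simpa only [sub_zero] using (hPlim x).sub hclim
  · simpa only [deriv_sub_const] using hP'lim

lemma weighted_poincare_of_lipschitzWith {lam : ℝ} (hω : IntervalIntegrable ω volume 0 1)
    (hω0 : ∫ x in (0 : ℝ)..1, ω x ≠ 0)
    (hsmooth : ∀ P : ℝ → ℝ, ContDiff ℝ (⊤ : ℕ∞) P → ∫ x in (0 : ℝ)..1, ω x * P x = 0 →
      lam * ∫ x in (0 : ℝ)..1, ω x * P x ^ 2 ≤ ∫ x in (0 : ℝ)..1, ω x * deriv P x ^ 2)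
    (hg : LipschitzWith K g) (hg0 : ∫ x in (0 : ℝ)..1, ω x * g x = 0) :
    lam * ∫ x in (0 : ℝ)..1, ω x * g x ^ 2 ≤ ∫ x in (0 : ℝ)..1, ω x * deriv g x ^ 2 := by
  obtain ⟨P, C, hP, hP0, hPC, hP'K, hPlim, hP'lim⟩ :=
    exists_contDiff_tendsto_of_weighted_mean_zero hω hω0 hg hg0
  have hsq {a b : ℝ} (h : |a| ≤ b) : |a ^ 2| ≤ b ^ 2 := by
    rw [abs_pow]
    exact pow_le_pow_left₀ (abs_nonneg a) h 2
  refine le_of_tendsto_of_tendsto' (b := atTop) (Tendsto.const_mul lam ?_) ?_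
    fun k => hsmooth _ (hP k) (hP0 k)
  · exact tendsto_intervalIntegral_mul_of_bound hω
      (fun k => ((hP k).continuous.pow 2).measurable) (fun k x hx => hsq (hPC k x hx))
      (Eventually.of_forall fun x _ => (hPlim x).pow 2)
  · exact tendsto_intervalIntegral_mul_of_bound hω
      (fun k => (measurable_deriv (P k)).pow_const 2) (fun k x _ => hsq (hP'K k x))
      (hP'lim.mono fun x hx _ => hx.pow 2)

lemma intervalIntegral_mul_deriv_sq_congr {f : ℝ → ℝ} {a b : ℝ} (hab : a ≤ b)
    (hfg : EqOn f g (Icc a b)) :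
    ∫ x in a..b, ω x * deriv f x ^ 2 = ∫ x in a..b, ω x * deriv g x ^ 2 := by
  refine intervalIntegral.integral_congr_Ioo_of_le hab fun x hx => ?_
  have : f =ᶠ[𝓝 x] g := hfg.eventuallyEq_of_mem (Icc_mem_nhds hx.1 hx.2)
  simp only [this.deriv_eq]

end WeightedPoincare

section Coordinates

variable {m : ℕ} {Ω : Set (EuclideanSpace ℝ (Fin (m + 1)))}

/-- The component `y` of a point `(x, y) ∈ ℝ × ℝ^m ≅ ℝ^{m+1}`; the component `x` of `z` is
written `z 0`. -/
def tailPt (m : ℕ) : EuclideanSpace ℝ (Fin (m + 1)) →L[ℝ] EuclideanSpace ℝ (Fin m) :=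
  (EuclideanSpace.equiv (Fin m) ℝ).symm.toContinuousLinearMap ∘L
    ContinuousLinearMap.pi fun i => EuclideanSpace.proj i.succ

@[simp]
lemma tailPt_apply (z : EuclideanSpace ℝ (Fin (m + 1))) (i : Fin m) : tailPt m z i = z i.succ := by
  simp [tailPt]

@[simp]
lemma mkPt_zero (x : ℝ) (y : EuclideanSpace ℝ (Fin m)) : mkPt m x y 0 = x := by
  simp [mkPt]

@[simp]
lemma mkPt_succ (x : ℝ) (y : EuclideanSpace ℝ (Fin m)) (i : Fin m) :
    mkPt m x y i.succ = y i := by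
  simp [mkPt]

@[simp]
lemma tailPt_mkPt (x : ℝ) (y : EuclideanSpace ℝ (Fin m)) : tailPt m (mkPt m x y) = y := by
  ext i
  simp

@[simp]
lemma mkPt_tailPt (z : EuclideanSpace ℝ (Fin (m + 1))) : mkPt m (z 0) (tailPt m z) = z := by
  ext i
  refine Fin.cases ?_ (fun j => ?_) i <;> simp

lemma norm_sq_eq_coord_zero_sq_add (z : EuclideanSpace ℝ (Fin (m + 1))) :
    ‖z‖ ^ 2 = z 0 ^ 2 + ‖tailPt m z‖ ^ 2 := by
  simp [EuclideanSpace.norm_sq_eq, Fin.sum_univ_succ]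

lemma homothety_mkPt (p : EuclideanSpace ℝ (Fin (m + 1))) (τ s : ℝ)
    (y : EuclideanSpace ℝ (Fin m)) :
    AffineMap.homothety p τ (mkPt m s y) =
      mkPt m (AffineMap.homothety (p 0) τ s) (AffineMap.homothety (tailPt m p) τ y) := by
  ext i
  refine Fin.cases ?_ (fun j => ?_) i <;> simp [AffineMap.homothety_apply]

lemma continuous_mkPt : Continuous fun z : ℝ × EuclideanSpace ℝ (Fin m) => mkPt m z.1 z.2 := by
  refine (EuclideanSpace.equiv (Fin (m + 1)) ℝ).symm.continuous.comp (continuous_pi fun i => ?_)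
  refine Fin.cases ?_ (fun j => ?_) i
  · simpa using continuous_fst
  · simp only [Fin.cons_succ]
    fun_prop

lemma measurableEmbedding_mkPt :
    MeasurableEmbedding fun z : ℝ × EuclideanSpace ℝ (Fin m) => mkPt m z.1 z.2 :=
  continuous_mkPt.measurableEmbedding fun z w h => Prod.ext
    (by simpa using congrArg (fun v => v 0) h) (by simpa using congrArg (tailPt m) h)

lemma measurePreserving_mkPt :
    MeasurePreserving (fun z : ℝ × EuclideanSpace ℝ (Fin m) => mkPt m z.1 z.2) := by
  have hfactor : (fun z : ℝ × EuclideanSpace ℝ (Fin m) => mkPt m z.1 z.2) =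
      WithLp.toLp 2 ∘ (MeasurableEquiv.piFinSuccAbove (fun _ : Fin (m + 1) => ℝ) 0).symm ∘
        Prod.map id WithLp.ofLp := by
    ext z i
    refine Fin.cases ?_ (fun j => ?_) i <;> simp [MeasurableEquiv.piFinSuccAbove]
  rw [hfactor]
  exact (PiLp.volume_preserving_toLp (Fin (m + 1))).comp
    ((volume_preserving_piFinSuccAbove (fun _ : Fin (m + 1) => ℝ) 0).symm.comp
      ((MeasurePreserving.id volume).prod (PiLp.volume_preserving_ofLp (Fin m))))

lemma continuous_mkPt_right (s : ℝ) : Continuous (mkPt m s) :=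
  continuous_mkPt.comp (Continuous.prodMk_right s)

lemma isOpen_cross (hΩ : IsOpen Ω) (s : ℝ) : IsOpen (cross Ω s) :=
  hΩ.preimage (continuous_mkPt_right s)

lemma measurableSet_cross (hΩ : MeasurableSet Ω) (s : ℝ) : MeasurableSet (cross Ω s) :=
  hΩ.preimage (continuous_mkPt_right s).measurable

lemma ωvol_nonneg (s : ℝ) : 0 ≤ ωvol Ω s := ENNReal.toReal_nonneg

lemma ubarFn_eq_setAverage (f : EuclideanSpace ℝ (Fin (m + 1)) → ℝ) (s : ℝ) :
    ubarFn Ω f s = ⨍ y in cross Ω s, f (mkPt m s y) := by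
  rw [setAverage_eq, smul_eq_mul, inv_mul_eq_div]
  rfl

end Coordinates

section Fubini

variable {m : ℕ} {Ω : Set (EuclideanSpace ℝ (Fin (m + 1)))} {f : EuclideanSpace ℝ (Fin (m + 1)) → ℝ}

lemma integral_indicator_mkPt (hΩ : MeasurableSet Ω) (s : ℝ) :
    ∫ y, Ω.indicator f (mkPt m s y) = ∫ y in cross Ω s, f (mkPt m s y) := by
  rw [← integral_indicator (measurableSet_cross hΩ s)]
  rfl

lemma integrable_indicator_mkPt (hΩ : MeasurableSet Ω) (hf : IntegrableOn f Ω) :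
    Integrable fun z : ℝ × EuclideanSpace ℝ (Fin m) => Ω.indicator f (mkPt m z.1 z.2) :=
  (measurePreserving_mkPt.integrable_comp_emb measurableEmbedding_mkPt).2
    ((integrable_indicator_iff hΩ).2 hf)

lemma setIntegral_eq_integral_cross (hΩ : MeasurableSet Ω) (hf : IntegrableOn f Ω) :
    ∫ z in Ω, f z = ∫ s, ∫ y in cross Ω s, f (mkPt m s y) := by
  rw [← integral_indicator hΩ,
    ← measurePreserving_mkPt.integral_comp measurableEmbedding_mkPt, Measure.volume_eq_prod,
    integral_prod _ (integrable_indicator_mkPt hΩ hf)]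
  simp only [integral_indicator_mkPt hΩ]

lemma integrable_integral_cross (hΩ : MeasurableSet Ω) (hf : IntegrableOn f Ω) :
    Integrable fun s => ∫ y in cross Ω s, f (mkPt m s y) := by
  simpa only [integral_indicator_mkPt hΩ] using
    (integrable_indicator_mkPt hΩ hf).integral_prod_left

lemma integrable_ωvol (hΩ : MeasurableSet Ω) (hfin : volume Ω ≠ ⊤) : Integrable (ωvol Ω) := by
  have h : Integrable fun s => (volume (cross Ω s)).toReal := by
    simpa [Measure.real] using
      integrable_integral_cross hΩ (f := fun _ => 1) (integrableOn_const hfin)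
  exact h

lemma cross_eq_empty (h01 : ∀ z ∈ Ω, z 0 ∈ Ioo (0 : ℝ) 1) {s : ℝ} (hs : s ∉ Ioo (0 : ℝ) 1) :
    cross Ω s = ∅ :=
  eq_empty_of_forall_notMem fun y hy => hs (by simpa using h01 _ hy)

lemma setIntegral_eq_intervalIntegral_cross (hΩ : MeasurableSet Ω)
    (h01 : ∀ z ∈ Ω, z 0 ∈ Ioo (0 : ℝ) 1) (hf : IntegrableOn f Ω) :
    ∫ z in Ω, f z = ∫ s in (0 : ℝ)..1, ∫ y in cross Ω s, f (mkPt m s y) := by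
  rw [setIntegral_eq_integral_cross hΩ hf, intervalIntegral.integral_of_le zero_le_one,
    integral_Ioc_eq_integral_Ioo, setIntegral_eq_integral_of_forall_compl_eq_zero fun s hs => ?_]
  rw [cross_eq_empty h01 hs, setIntegral_empty]

lemma integrableOn_comp_coord_zero (hfin : volume Ω ≠ ⊤) (hΩ : MeasurableSet Ω)
    (h01 : ∀ z ∈ Ω, z 0 ∈ Ioo (0 : ℝ) 1) {φ : ℝ → ℝ} (hφ : Continuous φ) :
    IntegrableOn (fun z : EuclideanSpace ℝ (Fin (m + 1)) => φ (z 0)) Ω := by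
  obtain ⟨C, hC⟩ := isCompact_Icc.exists_bound_of_continuousOn (s := Icc (0 : ℝ) 1)
    hφ.continuousOn
  have hφ0 : Continuous fun z : EuclideanSpace ℝ (Fin (m + 1)) => φ (z 0) := by fun_prop
  exact IntegrableOn.of_bound hfin.lt_top hφ0.aestronglyMeasurable C
    ((ae_restrict_mem hΩ).mono fun z hz => hC _ (Ioo_subset_Icc_self (h01 z hz)))

lemma setIntegral_comp_coord_zero (hfin : volume Ω ≠ ⊤) (hΩ : MeasurableSet Ω)
    (h01 : ∀ z ∈ Ω, z 0 ∈ Ioo (0 : ℝ) 1) {φ : ℝ → ℝ} (hφ : Continuous φ) :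
    ∫ z in Ω, φ (z 0) = ∫ s in (0 : ℝ)..1, ωvol Ω s * φ s := by
  rw [setIntegral_eq_intervalIntegral_cross hΩ h01 (integrableOn_comp_coord_zero hfin hΩ h01 hφ)]
  simp only [mkPt_zero, setIntegral_const, smul_eq_mul]
  rfl

end Fubini

section Eigenvalues

variable {m : ℕ} {Ω : Set (EuclideanSpace ℝ (Fin (m + 1)))}

/-- The Rayleigh quotient of `w` on `Ω`; it is `0` if `w` vanishes on `Ω`. -/
def rayleigh {k : ℕ} (Ω : Set (EuclideanSpace ℝ (Fin k))) (w : EuclideanSpace ℝ (Fin k) → ℝ) : ℝ :=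
  (∫ p in Ω, ‖gradient w p‖ ^ 2) / ∫ p in Ω, w p ^ 2

/-- The smallest nonzero Neumann eigenvalue `λ` of `Ω`, characterized variationally. -/
def neumannEigenvalue {k : ℕ} (Ω : Set (EuclideanSpace ℝ (Fin k))) : ℝ :=
  sInf {r | ∃ w : EuclideanSpace ℝ (Fin k) → ℝ, ContDiffOn ℝ (⊤ : ℕ∞) w (closure Ω) ∧
    (∃ p ∈ Ω, w p ≠ 0) ∧ ∫ p in Ω, w p = 0 ∧ r = rayleigh Ω w}

/-- The Rayleigh quotient of `g` for the Sturm–Liouville problem `-(ωφ')' = μωφ` on `(0, 1)`. -/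
def weightedRayleigh (ω g : ℝ → ℝ) : ℝ :=
  (∫ x in (0 : ℝ)..1, ω x * deriv g x ^ 2) / ∫ x in (0 : ℝ)..1, ω x * g x ^ 2

/-- The smallest positive Neumann eigenvalue `μ` of `-(ωφ')' = μωφ` on `(0, 1)`, characterized
variationally. -/
def weightedNeumannEigenvalue (ω : ℝ → ℝ) : ℝ :=
  sInf {r | ∃ g : ℝ → ℝ, (∃ K, LipschitzOnWith K g (Icc 0 1)) ∧ (∃ x ∈ Icc (0 : ℝ) 1, g x ≠ 0) ∧
    ∫ x in (0 : ℝ)..1, ω x * g x = 0 ∧ r = weightedRayleigh ω g}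

lemma intervalIntegral_mul_sq_nonneg {ω : ℝ → ℝ} (hω : ∀ x, 0 ≤ ω x) (g : ℝ → ℝ) :
    0 ≤ ∫ x in (0 : ℝ)..1, ω x * g x ^ 2 :=
  intervalIntegral.integral_nonneg zero_le_one fun x _ => mul_nonneg (hω x) (sq_nonneg _)

lemma weightedRayleigh_nonneg {ω : ℝ → ℝ} (hω : ∀ x, 0 ≤ ω x) (g : ℝ → ℝ) :
    0 ≤ weightedRayleigh ω g :=
  div_nonneg (intervalIntegral_mul_sq_nonneg hω _) (intervalIntegral_mul_sq_nonneg hω _)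

lemma neumannEigenvalue_mul_le {k : ℕ} {Ω : Set (EuclideanSpace ℝ (Fin k))}
    {w : EuclideanSpace ℝ (Fin k) → ℝ}
    (hw : ContDiffOn ℝ (⊤ : ℕ∞) w (closure Ω)) (hw0 : ∫ p in Ω, w p = 0) :
    neumannEigenvalue Ω * ∫ p in Ω, w p ^ 2 ≤ ∫ p in Ω, ‖gradient w p‖ ^ 2 := by
  have hnum : 0 ≤ ∫ p in Ω, ‖gradient w p‖ ^ 2 := integral_nonneg fun p => sq_nonneg _
  obtain hden | hden := (integral_nonneg fun p => sq_nonneg (w p) :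
    0 ≤ ∫ p in Ω, w p ^ 2).eq_or_lt
  · rwa [← hden, mul_zero]
  have hne : ∃ p ∈ Ω, w p ≠ 0 := by
    by_contra! hzero
    exact hden.ne' (setIntegral_eq_zero_of_forall_eq_zero fun p hp => by simp [hzero p hp])
  rw [← le_div_iff₀ hden]
  refine csInf_le ⟨0, ?_⟩ ⟨w, hw, hne, hw0, rfl⟩
  rintro _ ⟨v, -, -, -, rfl⟩
  exact div_nonneg (integral_nonneg fun p => sq_nonneg _) (integral_nonneg fun p => sq_nonneg _)

lemma weightedNeumannEigenvalue_nonneg {ω : ℝ → ℝ} (hω : ∀ x, 0 ≤ ω x) :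
    0 ≤ weightedNeumannEigenvalue ω := by
  refine Real.sInf_nonneg ?_
  rintro _ ⟨g, -, -, -, rfl⟩
  exact weightedRayleigh_nonneg hω g

lemma weightedNeumannEigenvalue_mul_le {ω g : ℝ → ℝ} {K : NNReal} (hω : ∀ x, 0 ≤ ω x)
    (hg : LipschitzWith K g) (hg0 : ∫ x in (0 : ℝ)..1, ω x * g x = 0) :
    weightedNeumannEigenvalue ω * ∫ x in (0 : ℝ)..1, ω x * g x ^ 2 ≤
      ∫ x in (0 : ℝ)..1, ω x * deriv g x ^ 2 := by
  obtain hden | hden := (intervalIntegral_mul_sq_nonneg hω g).eq_or_lt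
  · rw [← hden, mul_zero]
    exact intervalIntegral_mul_sq_nonneg hω _
  have hne : ∃ x ∈ Icc (0 : ℝ) 1, g x ≠ 0 := by
    by_contra! hzero
    refine hden.ne' (intervalIntegral.integral_zero_ae (Eventually.of_forall fun x hx => ?_))
    rw [hzero x (by simpa using uIoc_subset_uIcc hx)]
    simp
  rw [← le_div_iff₀ hden]
  refine csInf_le ⟨0, ?_⟩ ⟨g, ⟨K, hg.lipschitzOnWith⟩, hne, hg0, rfl⟩
  rintro _ ⟨h, -, -, -, rfl⟩
  exact weightedRayleigh_nonneg hω h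

lemma intervalIntegral_mul_sq_pos {ω g : ℝ → ℝ} (hω : IntervalIntegrable ω volume 0 1)
    (hωpos : ∀ x ∈ Ioo (0 : ℝ) 1, 0 < ω x) (hg : ContinuousOn g (Icc 0 1))
    (hne : ∃ x ∈ Icc (0 : ℝ) 1, g x ≠ 0) : 0 < ∫ x in (0 : ℝ)..1, ω x * g x ^ 2 := by
  obtain ⟨x, hx, hgx⟩ : ∃ x ∈ Ioo (0 : ℝ) 1, g x ≠ 0 := by
    by_contra! hzero
    obtain ⟨x, hx, hgx⟩ := hne
    exact hgx (EqOn.of_subset_closure hzero hg continuousOn_const Ioo_subset_Icc_self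
      (closure_Ioo zero_ne_one).ge hx)
  have hopen : IsOpen (Ioo (0 : ℝ) 1 ∩ g ⁻¹' {0}ᶜ) :=
    (hg.mono Ioo_subset_Icc_self).isOpen_inter_preimage isOpen_Ioo isOpen_compl_singleton
  have hint : IntervalIntegrable (fun x => ω x * g x ^ 2) volume 0 1 :=
    hω.mul_continuousOn (by rw [uIcc_of_le zero_le_one]; exact hg.pow 2)
  rw [intervalIntegral.integral_pos_iff_support_of_nonneg_ae' ?_ hint]
  · refine ⟨zero_lt_one, (hopen.measure_pos volume ⟨x, hx, hgx⟩).trans_le (measure_mono ?_)⟩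
    exact fun y hy => ⟨mul_ne_zero (hωpos y hy.1).ne' (pow_ne_zero 2 hy.2),
      Ioo_subset_Ioc_self hy.1⟩
  · rw [uIoc_of_le zero_le_one, ← restrict_Ioo_eq_restrict_Ioc]
    exact (ae_restrict_mem measurableSet_Ioo).mono fun y hy =>
      mul_nonneg (hωpos y hy).le (sq_nonneg _)

lemma norm_gradient_comp_coord_zero {P : ℝ → ℝ} {z : EuclideanSpace ℝ (Fin (m + 1))}
    (hP : DifferentiableAt ℝ P (z 0)) :
    ‖gradient (fun q : EuclideanSpace ℝ (Fin (m + 1)) => P (q 0)) z‖ = |deriv P (z 0)| := by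
  have hgrad : HasGradientAt (fun q : EuclideanSpace ℝ (Fin (m + 1)) => P (q 0))
      (deriv P (z 0) • EuclideanSpace.single 0 (1 : ℝ)) z := by
    rw [hasGradientAt_iff_hasFDerivAt]
    have hproj : HasFDerivAt (fun q : EuclideanSpace ℝ (Fin (m + 1)) => q 0)
        (EuclideanSpace.proj 0 : EuclideanSpace ℝ (Fin (m + 1)) →L[ℝ] ℝ) z :=
      (EuclideanSpace.proj 0 : EuclideanSpace ℝ (Fin (m + 1)) →L[ℝ] ℝ).hasFDerivAt
    refine (hP.hasDerivAt.comp_hasFDerivAt z hproj).congr_fderiv ?_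
    ext v
    simp [EuclideanSpace.inner_single_left]
  rw [hgrad.gradient, norm_smul]
  simp

lemma neumannEigenvalue_mul_le_weighted (hfin : volume Ω ≠ ⊤) (hΩ : MeasurableSet Ω)
    (h01 : ∀ z ∈ Ω, z 0 ∈ Ioo (0 : ℝ) 1) {P : ℝ → ℝ} (hP : ContDiff ℝ (⊤ : ℕ∞) P)
    (hP0 : ∫ x in (0 : ℝ)..1, ωvol Ω x * P x = 0) :
    neumannEigenvalue Ω * ∫ x in (0 : ℝ)..1, ωvol Ω x * P x ^ 2 ≤
      ∫ x in (0 : ℝ)..1, ωvol Ω x * deriv P x ^ 2 := by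
  have hfub {φ : ℝ → ℝ} (hφ : Continuous φ) := setIntegral_comp_coord_zero hfin hΩ h01 hφ
  have hw : ContDiff ℝ (⊤ : ℕ∞) fun z : EuclideanSpace ℝ (Fin (m + 1)) => P (z 0) :=
    hP.comp (EuclideanSpace.proj 0 : EuclideanSpace ℝ (Fin (m + 1)) →L[ℝ] ℝ).contDiff
  have h := neumannEigenvalue_mul_le (Ω := Ω) hw.contDiffOn ((hfub hP.continuous).trans hP0)
  simp only [norm_gradient_comp_coord_zero (hP.differentiable (by simp)).differentiableAt,
    sq_abs] at h
  rwa [hfub (φ := fun x => P x ^ 2) (hP.continuous.pow 2),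
    hfub (φ := fun x => deriv P x ^ 2) ((contDiff_infty_iff_deriv.1 hP).2.continuous.pow 2)] at h

lemma neumannEigenvalue_le_weightedRayleigh (hfin : volume Ω ≠ ⊤) (hΩ : MeasurableSet Ω)
    (h01 : ∀ z ∈ Ω, z 0 ∈ Ioo (0 : ℝ) 1) (hpos : ∀ s ∈ Ioo (0 : ℝ) 1, 0 < ωvol Ω s)
    {g : ℝ → ℝ} {K : NNReal} (hg : LipschitzOnWith K g (Icc 0 1))
    (hne : ∃ x ∈ Icc (0 : ℝ) 1, g x ≠ 0) (hg0 : ∫ x in (0 : ℝ)..1, ωvol Ω x * g x = 0) :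
    neumannEigenvalue Ω ≤ weightedRayleigh (ωvol Ω) g := by
  have hω : IntervalIntegrable (ωvol Ω) volume 0 1 :=
    (integrable_ωvol hΩ hfin).intervalIntegrable
  obtain ⟨G, hG, hgG⟩ := hg.extend_real
  have hmean : ∫ x in (0 : ℝ)..1, ωvol Ω x * G x = ∫ x in (0 : ℝ)..1, ωvol Ω x * g x :=
    intervalIntegral.integral_congr_Ioo_of_le zero_le_one fun x hx => by
      simp only [hgG (Ioo_subset_Icc_self hx)]
  have hsq : ∫ x in (0 : ℝ)..1, ωvol Ω x * g x ^ 2 = ∫ x in (0 : ℝ)..1, ωvol Ω x * G x ^ 2 :=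
    intervalIntegral.integral_congr_Ioo_of_le zero_le_one fun x hx => by
      simp only [hgG (Ioo_subset_Icc_self hx)]
  rw [weightedRayleigh, le_div_iff₀ (intervalIntegral_mul_sq_pos hω hpos hg.continuousOn hne),
    intervalIntegral_mul_deriv_sq_congr zero_le_one hgG, hsq]
  exact weighted_poincare_of_lipschitzWith hω
    (intervalIntegral.intervalIntegral_pos_of_pos_on hω hpos zero_lt_one).ne'
    (fun P hP hP0 => neumannEigenvalue_mul_le_weighted hfin hΩ h01 hP hP0) hG (hmean.trans hg0)

lemma exists_lipschitz_weighted_mean_zero {ω : ℝ → ℝ} (hω : IntervalIntegrable ω volume 0 1)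
    (hω0 : ∫ x in (0 : ℝ)..1, ω x ≠ 0) :
    ∃ g : ℝ → ℝ, LipschitzWith 1 g ∧ (∃ x ∈ Icc (0 : ℝ) 1, g x ≠ 0) ∧
      ∫ x in (0 : ℝ)..1, ω x * g x = 0 := by
  set c := (∫ x in (0 : ℝ)..1, ω x * x) / ∫ x in (0 : ℝ)..1, ω x with hc
  refine ⟨fun x => x - c, LipschitzWith.of_dist_le_mul fun x y => by simp, ?_, ?_⟩
  · by_contra! hzero
    have h0 := hzero 0 (left_mem_Icc.2 zero_le_one)
    have h1 := hzero 1 (right_mem_Icc.2 zero_le_one)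
    linarith
  · simp only [mul_sub]
    rw [intervalIntegral.integral_sub
      (hω.mul_continuousOn (g := fun x => x) continuousOn_id) (hω.mul_const _),
      intervalIntegral.integral_mul_const, hc, mul_div_cancel₀ _ hω0]
    exact sub_self _

theorem neumannEigenvalue_le_weightedNeumannEigenvalue (hfin : volume Ω ≠ ⊤)
    (hΩ : MeasurableSet Ω) (h01 : ∀ z ∈ Ω, z 0 ∈ Ioo (0 : ℝ) 1)
    (hpos : ∀ s ∈ Ioo (0 : ℝ) 1, 0 < ωvol Ω s) :
    neumannEigenvalue Ω ≤ weightedNeumannEigenvalue (ωvol Ω) := by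
  have hω : IntervalIntegrable (ωvol Ω) volume 0 1 :=
    (integrable_ωvol hΩ hfin).intervalIntegrable
  obtain ⟨g, hg, hne, hg0⟩ := exists_lipschitz_weighted_mean_zero hω
    (intervalIntegral.intervalIntegral_pos_of_pos_on hω hpos zero_lt_one).ne'
  refine le_csInf ⟨_, g, ⟨1, hg.lipschitzOnWith⟩, hne, hg0, rfl⟩ ?_
  rintro _ ⟨h, ⟨K, hK⟩, hh, hh0, rfl⟩
  exact neumannEigenvalue_le_weightedRayleigh hfin hΩ h01 hpos hK hh hh0

end Eigenvalues

section SetAverage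

variable {α : Type*} [MeasurableSpace α] {ν : Measure α} {A S : Set α} {φ : α → ℝ} {c κ : ℝ}

lemma abs_setAverage_sub_le (hS : MeasurableSet S) (hS0 : 0 < ν.real S) (hi : IntegrableOn φ S ν)
    (hφ : ∀ x ∈ S, |φ x - c| ≤ κ) : |⨍ x in S, φ x ∂ν - c| ≤ κ := by
  obtain ⟨h0, htop⟩ := ENNReal.toReal_pos_iff.1 hS0
  exact mem_closedBall_iff_norm.1 <| (convex_closedBall c κ).set_average_mem
    Metric.isClosed_closedBall h0.ne' htop.ne
    ((ae_restrict_mem hS).mono fun x hx => mem_closedBall_iff_norm.2 (hφ x hx)) hi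

lemma measureReal_mul_setAverage_sq_le (hS0 : 0 < ν.real S) (hi : IntegrableOn φ S ν)
    (hi2 : IntegrableOn (fun x => φ x ^ 2) S ν) :
    ν.real S * (⨍ x in S, φ x ∂ν) ^ 2 ≤ ∫ x in S, φ x ^ 2 ∂ν := by
  obtain ⟨h0, htop⟩ := ENNReal.toReal_pos_iff.1 hS0
  rw [← measure_smul_setAverage _ htop.ne, smul_eq_mul]
  exact mul_le_mul_of_nonneg_left ((even_two.convexOn_pow (𝕜 := ℝ)).map_set_average_le
    (continuous_pow 2).continuousOn isClosed_univ h0.ne' htop.ne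
    (Eventually.of_forall fun _ => mem_univ _) hi hi2) hS0.le

lemma abs_setAverage_sub_setAverage_le (hAS : A ⊆ S) (hA : MeasurableSet A)
    (hS : MeasurableSet S) (hSfin : ν S ≠ ⊤) (hA0 : 0 < ν.real A) (hi : IntegrableOn φ S ν)
    (hφ : ∀ x ∈ S, |φ x - c| ≤ κ) :
    |⨍ x in A, φ x ∂ν - ⨍ x in S, φ x ∂ν| ≤ 2 * κ * ((ν.real S - ν.real A) / ν.real S) := by
  have hAfin : ν A ≠ ⊤ := measure_ne_top_of_subset hAS hSfin
  have hDfin : ν (S \ A) ≠ ⊤ := measure_ne_top_of_subset sdiff_subset hSfin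
  have hD : ν.real (S \ A) = ν.real S - ν.real A := measureReal_sdiff hAS hA hSfin
  have hS0 : 0 < ν.real S := hA0.trans_le (measureReal_mono hAS hSfin)
  have hunion : ⨍ x in S, φ x ∂ν = (ν.real A / ν.real S) * ⨍ x in A, φ x ∂ν +
      (ν.real (S \ A) / ν.real S) * ⨍ x in S \ A, φ x ∂ν := by
    have := average_union (f := φ) disjoint_sdiff_right.aedisjoint
      (hS.diff hA).nullMeasurableSet hAfin hDfin (hi.mono_set hAS) (hi.mono_set sdiff_subset)
    rwa [union_sdiff_cancel hAS, show ν.real A + ν.real (S \ A) = ν.real S by linarith] at this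
  have hdiff : ⨍ x in A, φ x ∂ν - ⨍ x in S, φ x ∂ν =
      (ν.real (S \ A) / ν.real S) * (⨍ x in A, φ x ∂ν - ⨍ x in S \ A, φ x ∂ν) := by
    rw [hunion, hD]
    field_simp
    ring
  rw [hdiff, ← hD]
  obtain hD0 | hD0 := (measureReal_nonneg : 0 ≤ ν.real (S \ A)).eq_or_lt
  · simp [← hD0]
  · have hAc := abs_setAverage_sub_le hA hA0 (hi.mono_set hAS) fun x hx => hφ x (hAS hx)
    have hDc := abs_setAverage_sub_le (hS.diff hA) hD0 (hi.mono_set sdiff_subset)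
      fun x hx => hφ x hx.1
    rw [abs_mul, abs_of_pos (div_pos hD0 hS0), mul_comm]
    refine mul_le_mul_of_nonneg_right ?_ (div_pos hD0 hS0).le
    rw [abs_le] at hAc hDc ⊢
    constructor <;> linarith

lemma setIntegral_sq_sub_le_of_abs_sub_le {f g : α → ℝ} {M : ℝ} (hS : MeasurableSet S)
    (hSfin : ν S ≠ ⊤) (hf : IntegrableOn (fun x => f x ^ 2) S ν)
    (hg : IntegrableOn (fun x => g x ^ 2) S ν)
    (hfg : ∀ x ∈ S, |f x - g x| ≤ κ) (hgM : ∀ x ∈ S, |g x| ≤ M) :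
    ∫ x in S, g x ^ 2 ∂ν - 2 * κ * M * ν.real S ≤ ∫ x in S, f x ^ 2 ∂ν := by
  have hconst : IntegrableOn (fun _ => 2 * κ * M) S ν := integrableOn_const hSfin
  have hpt : ∀ x ∈ S, g x ^ 2 - 2 * κ * M ≤ f x ^ 2 := fun x hx => by
    have hprod : |f x - g x| * |g x| ≤ κ * M :=
      mul_le_mul (hfg x hx) (hgM x hx) (abs_nonneg _) ((abs_nonneg _).trans (hfg x hx))
    rw [← abs_mul] at hprod
    nlinarith [neg_le_of_abs_le hprod, sq_nonneg (f x - g x)]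
  calc ∫ x in S, g x ^ 2 ∂ν - 2 * κ * M * ν.real S
      = ∫ x in S, (g x ^ 2 - 2 * κ * M) ∂ν := by
        rw [integral_sub hg hconst, setIntegral_const, smul_eq_mul, mul_comm (ν.real S)]
    _ ≤ ∫ x in S, f x ^ 2 ∂ν := setIntegral_mono_on (hg.sub hconst) hf hS hpt

end SetAverage

section Homothety

variable {E : Type*} [NormedAddCommGroup E] [NormedSpace ℝ E] {a : E} {τ : ℝ}

lemma homothety_injective (hτ : τ ≠ 0) : Function.Injective (AffineMap.homothety a τ) :=
  fun x y h => by simpa [AffineMap.homothety_apply, hτ] using h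

lemma homothety_mem_of_mem_closure {Ω : Set E} (hconv : Convex ℝ Ω) (hopen : IsOpen Ω)
    (ha : a ∈ closure Ω) (hτ : 0 < τ) (hτ1 : τ ≤ 1) {z : E} (hz : z ∈ Ω) :
    AffineMap.homothety a τ z ∈ Ω := by
  have h := hconv.combo_closure_interior_mem_interior ha (by rwa [hopen.interior_eq])
    (sub_nonneg.2 hτ1) hτ (sub_add_cancel 1 τ)
  rwa [hopen.interior_eq, ← AffineMap.lineMap_apply_module] at h

variable [MeasurableSpace E] [BorelSpace E] [FiniteDimensional ℝ E] {μ : Measure E}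
  [μ.IsAddHaarMeasure] {A : Set E}

lemma measureReal_image_homothety (hτ : 0 ≤ τ) :
    μ.real (AffineMap.homothety a τ '' A) = τ ^ Module.finrank ℝ E * μ.real A := by
  rw [Measure.real, Measure.addHaar_image_homothety, ENNReal.toReal_mul,
    abs_of_nonneg (by positivity), ENNReal.toReal_ofReal (by positivity), Measure.real]

lemma setAverage_image_homothety (hA : MeasurableSet A) (hτ : 0 < τ) (φ : E → ℝ) :
    ⨍ y in AffineMap.homothety a τ '' A, φ y ∂μ = ⨍ y in A, φ (AffineMap.homothety a τ y) ∂μ := by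
  have hderiv (y : E) (_ : y ∈ A) : HasFDerivWithinAt (AffineMap.homothety a τ)
      (τ • ContinuousLinearMap.id ℝ E) A y := by
    have : (AffineMap.homothety a τ : E → E) = fun y => τ • (y - a) + a := by
      ext y
      rw [AffineMap.homothety_apply, vsub_eq_sub, vadd_eq_add]
    rw [this]
    exact (((hasFDerivAt_id y).sub_const a).const_smul τ |>.add_const a).hasFDerivWithinAt
  have hdet : |(τ • ContinuousLinearMap.id ℝ E).det| = τ ^ Module.finrank ℝ E := by
    simp [ContinuousLinearMap.det, abs_of_pos hτ]
  rw [setAverage_eq, setAverage_eq, measureReal_image_homothety hτ.le,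
    integral_image_eq_integral_abs_det_fderiv_smul μ hA hderiv (homothety_injective hτ.ne').injOn]
  simp only [hdet, smul_eq_mul, integral_const_mul]
  field_simp

end Homothety

section ThinConvex

variable {m : ℕ} {Ω : Set (EuclideanSpace ℝ (Fin (m + 1)))} {ε : ℝ}

/-- `Ω` is a thin convex domain of length `1`: an open convex subset of `(0, 1) × B(ε)` all of
whose cross-sections over `(0, 1)` are nonempty. -/
structure IsThinConvex (ε : ℝ) (Ω : Set (EuclideanSpace ℝ (Fin (m + 1)))) : Prop where
  isOpen : IsOpen Ω
  convex : Convex ℝ Ω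
  mem_Ioo : ∀ z ∈ Ω, z 0 ∈ Ioo (0 : ℝ) 1
  norm_tailPt_lt : ∀ z ∈ Ω, ‖tailPt m z‖ < ε
  cross_nonempty : ∀ s ∈ Ioo (0 : ℝ) 1, (cross Ω s).Nonempty

lemma IsThinConvex.of_mkPt_mem (hopen : IsOpen Ω) (hconv : Convex ℝ Ω)
    (hslab : ∀ x y, mkPt m x y ∈ Ω →
      x ∈ Ioo (0 : ℝ) 1 ∧ y ∈ Metric.ball (0 : EuclideanSpace ℝ (Fin m)) ε)
    (hcross : ∀ s ∈ Ioo (0 : ℝ) 1, (cross Ω s).Nonempty) : IsThinConvex ε Ω where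
  isOpen := hopen
  convex := hconv
  mem_Ioo z hz := (hslab (z 0) (tailPt m z) ((mkPt_tailPt z).symm ▸ hz)).1
  norm_tailPt_lt z hz :=
    mem_ball_zero_iff.1 (hslab (z 0) (tailPt m z) ((mkPt_tailPt z).symm ▸ hz)).2
  cross_nonempty := hcross

lemma one_sub_mul_div_le_pow (m : ℕ) {τ s : ℝ} (hτ : 0 < τ) (hτ1 : τ < 1)
    (hs : s ∈ Ioo (0 : ℝ) 1) :
    1 - m * ((1 - τ) / (1 - s)) ≤ (τ * ((1 - s) / (1 - τ * s))) ^ m := by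
  have hτs : τ * s < s := mul_lt_of_lt_one_left hs.1 hτ1
  have hs1 : 0 < 1 - s := sub_pos.2 hs.2
  have hτs1 : 0 < 1 - τ * s := by linarith
  have heq : 1 - τ * ((1 - s) / (1 - τ * s)) = (1 - τ) / (1 - τ * s) := by
    rw [eq_div_iff hτs1.ne']
    linear_combination -τ * div_mul_cancel₀ (1 - s) hτs1.ne'
  have hle : (1 - τ) / (1 - τ * s) ≤ (1 - τ) / (1 - s) := by
    have := (sub_pos.2 hτ1).le
    gcongr
  have hbern := one_add_mul_le_pow (a := τ * ((1 - s) / (1 - τ * s)) - 1)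
    (by linarith [mul_pos hτ (div_pos hs1 hτs1)]) m
  rw [add_sub_cancel] at hbern
  nlinarith [m.cast_nonneg (α := ℝ)]

lemma norm_le_abs_coord_zero_add (z : EuclideanSpace ℝ (Fin (m + 1))) :
    ‖z‖ ≤ |z 0| + ‖tailPt m z‖ := by
  refine (sq_le_sq₀ (norm_nonneg z) (by positivity)).1 ?_
  rw [norm_sq_eq_coord_zero_sq_add, add_sq, sq_abs]
  nlinarith [mul_nonneg (abs_nonneg (z 0)) (norm_nonneg (tailPt m z))]

namespace IsThinConvex

variable (hΩ : IsThinConvex ε Ω)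
include hΩ

lemma exists_mem : ∃ z ∈ Ω, z 0 = 1 / 2 := by
  obtain ⟨y, hy⟩ := hΩ.cross_nonempty (1 / 2) ⟨by norm_num, by norm_num⟩
  exact ⟨_, hy, mkPt_zero ..⟩

lemma pos : 0 < ε := by
  obtain ⟨z, hz, -⟩ := hΩ.exists_mem
  exact (norm_nonneg _).trans_lt (hΩ.norm_tailPt_lt z hz)

lemma volume_cross_ne_top (s : ℝ) : volume (cross Ω s) ≠ ⊤ := by
  have hsub : cross Ω s ⊆ Metric.ball 0 ε := fun y hy => by
    simpa using hΩ.norm_tailPt_lt _ hy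
  exact measure_ne_top_of_subset hsub measure_ball_lt_top.ne

lemma ωvol_pos {s : ℝ} (hs : s ∈ Ioo (0 : ℝ) 1) : 0 < ωvol Ω s :=
  ENNReal.toReal_pos ((isOpen_cross hΩ.isOpen s).measure_pos _ (hΩ.cross_nonempty s hs)).ne'
    (hΩ.volume_cross_ne_top s)

lemma norm_tailPt_le_of_mem_closure {z : EuclideanSpace ℝ (Fin (m + 1))} (hz : z ∈ closure Ω) :
    ‖tailPt m z‖ ≤ ε :=
  closure_minimal (fun w hw => (hΩ.norm_tailPt_lt w hw).le)
    (isClosed_le (tailPt m).continuous.norm continuous_const) hz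

lemma norm_tailPt_sub_le {z w : EuclideanSpace ℝ (Fin (m + 1))} (hz : z ∈ closure Ω)
    (hw : w ∈ closure Ω) : ‖tailPt m (z - w)‖ ≤ 2 * ε := by
  rw [map_sub]
  linarith [norm_sub_le (tailPt m z) (tailPt m w), hΩ.norm_tailPt_le_of_mem_closure hz,
    hΩ.norm_tailPt_le_of_mem_closure hw]

lemma norm_sub_le {z w : EuclideanSpace ℝ (Fin (m + 1))} (hz : z ∈ Ω) (hw : w ∈ Ω) :
    ‖z - w‖ ≤ |z 0 - w 0| + 2 * ε :=
  (norm_le_abs_coord_zero_add (z - w)).trans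
    (add_le_add le_rfl (hΩ.norm_tailPt_sub_le (subset_closure hz) (subset_closure hw)))

lemma norm_sub_le_one_add {z w : EuclideanSpace ℝ (Fin (m + 1))} (hz : z ∈ Ω) (hw : w ∈ Ω) :
    ‖z - w‖ ≤ 1 + 2 * ε := by
  refine (hΩ.norm_sub_le hz hw).trans (add_le_add (abs_le.2 ?_) le_rfl)
  have hz0 := hΩ.mem_Ioo z hz
  have hw0 := hΩ.mem_Ioo w hw
  constructor <;> linarith [hz0.1, hz0.2, hw0.1, hw0.2]

lemma norm_sub_sq_le {z p : EuclideanSpace ℝ (Fin (m + 1))} (hz : z ∈ Ω) (hp : p ∈ closure Ω)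
    (hp0 : p 0 = 0) : ‖z - p‖ ^ 2 ≤ z 0 ^ 2 + 4 * ε ^ 2 := by
  have htail := pow_le_pow_left₀ (norm_nonneg _)
    (hΩ.norm_tailPt_sub_le (subset_closure hz) hp) 2
  rw [norm_sq_eq_coord_zero_sq_add, PiLp.sub_apply, hp0, sub_zero]
  linarith

lemma norm_sub_le_of_coord_zero_eq_zero {z p : EuclideanSpace ℝ (Fin (m + 1))} (hz : z ∈ Ω)
    (hp : p ∈ closure Ω) (hp0 : p 0 = 0) : ‖z - p‖ ≤ z 0 + 2 * ε := by
  refine (abs_le_of_sq_le_sq' ((hΩ.norm_sub_sq_le hz hp hp0).trans ?_) ?_).2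
  all_goals nlinarith [(hΩ.mem_Ioo z hz).1, hΩ.pos]

lemma isBounded : Bornology.IsBounded Ω :=
  Metric.isBounded_iff.2 ⟨1 + 2 * ε, fun z hz w hw => by
    simpa only [dist_eq_norm] using hΩ.norm_sub_le_one_add hz hw⟩

lemma volume_ne_top : volume Ω ≠ ⊤ := hΩ.isBounded.measure_lt_top.ne

lemma volume_pos : 0 < volume.real Ω := by
  obtain ⟨z, hz, -⟩ := hΩ.exists_mem
  exact ENNReal.toReal_pos (hΩ.isOpen.measure_pos volume ⟨z, hz⟩).ne' hΩ.volume_ne_top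

lemma exists_mem_closure {t : ℝ} (ht : t ∈ Icc (0 : ℝ) 1) : ∃ p ∈ closure Ω, p 0 = t := by
  have hclosed : IsClosed ((fun z : EuclideanSpace ℝ (Fin (m + 1)) => z 0) '' closure Ω) :=
    (hΩ.isBounded.isCompact_closure.image (by fun_prop)).isClosed
  have hsub : Ioo (0 : ℝ) 1 ⊆ (fun z : EuclideanSpace ℝ (Fin (m + 1)) => z 0) '' closure Ω :=
    fun s hs => by
      obtain ⟨y, hy⟩ := hΩ.cross_nonempty s hs
      exact ⟨_, subset_closure hy, mkPt_zero ..⟩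
  exact closure_minimal hsub hclosed (by rwa [closure_Ioo zero_ne_one])

lemma image_homothety_cross_subset {r : EuclideanSpace ℝ (Fin (m + 1))} (hr : r ∈ closure Ω)
    {τ : ℝ} (hτ : 0 < τ) (hτ1 : τ ≤ 1) (s : ℝ) :
    AffineMap.homothety (tailPt m r) τ '' cross Ω s ⊆
      cross Ω (AffineMap.homothety (r 0) τ s) := by
  rintro _ ⟨y, hy, rfl⟩
  have := homothety_mem_of_mem_closure hΩ.convex hΩ.isOpen hr hτ hτ1 hy
  rwa [homothety_mkPt] at this

lemma pow_mul_ωvol_le {r : EuclideanSpace ℝ (Fin (m + 1))} (hr : r ∈ closure Ω)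
    {τ : ℝ} (hτ : 0 < τ) (hτ1 : τ ≤ 1) (s : ℝ) :
    τ ^ m * ωvol Ω s ≤ ωvol Ω (AffineMap.homothety (r 0) τ s) := by
  have := measureReal_mono (hΩ.image_homothety_cross_subset hr hτ hτ1 s)
    (hΩ.volume_cross_ne_top _)
  rwa [measureReal_image_homothety hτ.le, finrank_euclideanSpace_fin] at this

lemma ωvol_ratio_le {τ s : ℝ} (hτ : 0 < τ) (hτ1 : τ < 1) (hs : s ∈ Ioo (0 : ℝ) 1) :
    (ωvol Ω (τ * s) - τ ^ m * ωvol Ω s) / ωvol Ω (τ * s) ≤ m * (1 - τ) / (1 - s) := by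
  have hτs : τ * s < s := mul_lt_of_lt_one_left hs.1 hτ1
  have hτs1 : 0 < 1 - τ * s := by linarith [hs.2]
  set ρ := (1 - s) / (1 - τ * s)
  have hρ0 : 0 < ρ := div_pos (sub_pos.2 hs.2) hτs1
  obtain ⟨q, hq, hq0⟩ := hΩ.exists_mem_closure (right_mem_Icc.2 (zero_le_one' ℝ))
  have hqs : AffineMap.homothety (q 0) ρ (τ * s) = s := by
    rw [AffineMap.homothety_apply, hq0, vsub_eq_sub, smul_eq_mul, vadd_eq_add]
    linear_combination -div_mul_cancel₀ (1 - s) hτs1.ne'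
  have hρω : ρ ^ m * ωvol Ω (τ * s) ≤ ωvol Ω s := by
    have := hΩ.pow_mul_ωvol_le hq hρ0 ((div_le_one hτs1).2 (by linarith)) (τ * s)
    rwa [hqs] at this
  have hbern := one_sub_mul_div_le_pow m hτ hτ1 hs
  have hω : 0 < ωvol Ω (τ * s) := hΩ.ωvol_pos ⟨mul_pos hτ hs.1, hτs.trans hs.2⟩
  rw [mul_div_assoc, div_le_iff₀ hω]
  calc ωvol Ω (τ * s) - τ ^ m * ωvol Ω s
      ≤ ωvol Ω (τ * s) - τ ^ m * (ρ ^ m * ωvol Ω (τ * s)) := by gcongr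
    _ = (1 - (τ * ρ) ^ m) * ωvol Ω (τ * s) := by rw [mul_pow]; ring
    _ ≤ m * ((1 - τ) / (1 - s)) * ωvol Ω (τ * s) := by gcongr; linarith

end IsThinConvex

end ThinConvex

section ThinGradientBound

variable {m : ℕ} {Ω : Set (EuclideanSpace ℝ (Fin (m + 1)))} {ε B : ℝ}
  {u : EuclideanSpace ℝ (Fin (m + 1)) → ℝ} {p : EuclideanSpace ℝ (Fin (m + 1))} {s t : ℝ}

/-- `u` is differentiable on `Ω` and its gradient is at most `B` times the distance to the two
ends `x = 0` and `x = 1`, truncated from below at `ε`. -/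
structure HasThinGradientBound (ε B : ℝ) (Ω : Set (EuclideanSpace ℝ (Fin (m + 1))))
    (u : EuclideanSpace ℝ (Fin (m + 1)) → ℝ) : Prop where
  differentiableAt : ∀ z ∈ Ω, DifferentiableAt ℝ u z
  norm_gradient_le : ∀ z ∈ Ω, ‖gradient u z‖ ≤ B * max (min (z 0) (1 - z 0)) ε

lemma HasThinGradientBound.of_contDiffOn (hΩ : IsOpen Ω) {n : WithTop ℕ∞} (hn : n ≠ 0)
    (hu : ContDiffOn ℝ n u (closure Ω))
    (hgrad : ∀ z ∈ Ω, ‖gradient u z‖ ≤ B * max (min (z 0) (1 - z 0)) ε) :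
    HasThinGradientBound ε B Ω u where
  differentiableAt _ hz :=
    ((hu.mono subset_closure).contDiffAt (hΩ.mem_nhds hz)).differentiableAt hn
  norm_gradient_le := hgrad

lemma norm_gradient_eq_norm_fderiv {F : Type*} [NormedAddCommGroup F] [InnerProductSpace ℝ F]
    [CompleteSpace F] (f : F → ℝ) (x : F) : ‖gradient f x‖ = ‖fderiv ℝ f x‖ :=
  LinearIsometryEquiv.norm_map _ _

lemma measurable_gradient {F : Type*} [NormedAddCommGroup F] [InnerProductSpace ℝ F]
    [CompleteSpace F] [MeasurableSpace F] [BorelSpace F] (f : F → ℝ) : Measurable (gradient f) :=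
  (InnerProductSpace.toDual ℝ F).symm.continuous.measurable.comp (measurable_fderiv ℝ f)

lemma abs_le_of_hasDerivWithinAt_Iio {G c : ℝ → ℝ} {x D L : ℝ}
    (hG : HasDerivWithinAt G D (Iio x) x) (hc : Tendsto c (𝓝[<] x) (𝓝 L))
    (hle : ∀ᶠ τ in 𝓝[<] x, |G τ - G x| ≤ c τ * (x - τ)) : |D| ≤ L := by
  refine le_of_tendsto_of_tendsto
    ((hasDerivWithinAt_iff_tendsto_slope' self_notMem_Iio).1 hG).abs hc ?_
  filter_upwards [hle, self_mem_nhdsWithin] with τ hτ hτx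
  have hpos : 0 < x - τ := sub_pos.2 hτx
  have hden : |τ - x| = x - τ := by rw [abs_sub_comm, abs_of_pos hpos]
  rw [slope_def_field, abs_div, hden]
  exact (div_le_iff₀ hpos).2 hτ

lemma hasDerivAt_comp_homothety {F : Type*} [NormedAddCommGroup F] [InnerProductSpace ℝ F]
    [CompleteSpace F] {f : F → ℝ} {z : F} (hf : DifferentiableAt ℝ f z) (p : F) :
    HasDerivAt (fun τ : ℝ => f (AffineMap.homothety p τ z)) ⟪gradient f z, z - p⟫ 1 := by
  have hline : HasDerivAt (fun τ : ℝ => AffineMap.homothety p τ z) (z - p) 1 := by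
    simpa only [AffineMap.homothety_eq_lineMap] using AffineMap.hasDerivAt_lineMap
  rw [gradient, InnerProductSpace.toDual_symm_apply]
  exact HasFDerivAt.comp_hasDerivAt 1 (by simpa using hf.hasFDerivAt) hline

/-- The cross-sectional average `ū` on `[ε, 1 - ε]`, extended to `ℝ` by its end values: the test
function for the one-dimensional problem. -/
def clampedAverage (ε : ℝ) (Ω : Set (EuclideanSpace ℝ (Fin (m + 1))))
    (u : EuclideanSpace ℝ (Fin (m + 1)) → ℝ) (x : ℝ) : ℝ :=
  ubarFn Ω u (max ε (min (1 - ε) x))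

lemma clampedAverage_of_mem_Icc (hs : s ∈ Icc ε (1 - ε)) :
    clampedAverage ε Ω u s = ubarFn Ω u s := by
  rw [clampedAverage, min_eq_right hs.2, max_eq_right hs.1]

lemma deriv_clampedAverage_of_mem_Ioo (hs : s ∈ Ioo ε (1 - ε)) :
    deriv (clampedAverage ε Ω u) s = deriv (ubarFn Ω u) s :=
  EventuallyEq.deriv_eq <| mem_of_superset (Ioo_mem_nhds hs.1 hs.2) fun _ hx =>
    clampedAverage_of_mem_Icc (Ioo_subset_Icc_self hx)

lemma deriv_clampedAverage_of_notMem_Icc (hs : s ∉ Icc ε (1 - ε)) :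
    deriv (clampedAverage ε Ω u) s = 0 := by
  have hconst : clampedAverage ε Ω u =ᶠ[𝓝 s] fun _ => clampedAverage ε Ω u s := by
    rcases lt_or_ge s ε with h | h
    · filter_upwards [Iio_mem_nhds h] with x hx
      rw [clampedAverage, clampedAverage, max_eq_left ((min_le_right _ _).trans (mem_Iio.1 hx).le),
        max_eq_left ((min_le_right _ _).trans h.le)]
    · have h' : 1 - ε < s := lt_of_not_ge fun h' => hs ⟨h, h'⟩
      filter_upwards [Ioi_mem_nhds h'] with x hx
      rw [clampedAverage, clampedAverage, min_eq_left (mem_Ioi.1 hx).le, min_eq_left h'.le]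
  rw [hconst.deriv_eq, deriv_const]

namespace HasThinGradientBound

variable (hu : HasThinGradientBound ε B Ω u) (hΩ : IsThinConvex ε Ω)

include hu in
lemma continuousOn : ContinuousOn u Ω :=
  fun z hz => (hu.differentiableAt z hz).continuousAt.continuousWithinAt

include hu hΩ

lemma nonneg : 0 ≤ B := by
  obtain ⟨z, hz, -⟩ := hΩ.exists_mem
  exact nonneg_of_mul_nonneg_left ((norm_nonneg _).trans (hu.norm_gradient_le z hz))
    (hΩ.pos.trans_le (le_max_right _ _))

lemma norm_gradient_le_const (hε : ε ≤ 1) {z : EuclideanSpace ℝ (Fin (m + 1))} (hz : z ∈ Ω) :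
    ‖gradient u z‖ ≤ B :=
  (hu.norm_gradient_le z hz).trans <| mul_le_of_le_one_right (hu.nonneg hΩ) <|
    max_le ((min_le_left _ _).trans (hΩ.mem_Ioo z hz).2.le) hε

lemma abs_sub_le (hε : ε ≤ 1) {z w : EuclideanSpace ℝ (Fin (m + 1))} (hz : z ∈ Ω) (hw : w ∈ Ω) :
    |u z - u w| ≤ B * ‖z - w‖ :=
  hΩ.convex.norm_image_sub_le_of_norm_fderiv_le hu.differentiableAt
    (fun _ hx => norm_gradient_eq_norm_fderiv u _ ▸ hu.norm_gradient_le_const hΩ hε hx) hw hz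

lemma abs_sub_le_of_coord_zero_eq {z w : EuclideanSpace ℝ (Fin (m + 1))} (hz : z ∈ Ω) (hw : w ∈ Ω)
    (hzt : z 0 = t) (hwt : w 0 = t) : |u z - u w| ≤ 2 * ε * B * max (min t (1 - t)) ε := by
  have hconv : Convex ℝ (Ω ∩ {v | v 0 = t}) :=
    hΩ.convex.inter <| (convex_singleton t).is_linear_preimage
      (EuclideanSpace.proj (𝕜 := ℝ) (0 : Fin (m + 1))).isLinear
  have hbound : ∀ v ∈ Ω ∩ {v | v 0 = t}, ‖fderiv ℝ u v‖ ≤ B * max (min t (1 - t)) ε := by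
    rintro v ⟨hv, rfl⟩
    exact norm_gradient_eq_norm_fderiv u v ▸ hu.norm_gradient_le v hv
  have hdist : ‖z - w‖ ≤ 2 * ε := by
    simpa [hzt, hwt] using hΩ.norm_sub_le hz hw
  have hB := hu.nonneg hΩ
  have hε := hΩ.pos
  calc |u z - u w| ≤ B * max (min t (1 - t)) ε * ‖z - w‖ :=
        hconv.norm_image_sub_le_of_norm_fderiv_le (fun v hv => hu.differentiableAt v hv.1) hbound
          ⟨hw, hwt⟩ ⟨hz, hzt⟩
    _ ≤ B * max (min t (1 - t)) ε * (2 * ε) := by gcongr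
    _ = 2 * ε * B * max (min t (1 - t)) ε := by ring

lemma exists_abs_le (hε : ε ≤ 1) : ∃ M, ∀ z ∈ Ω, |u z| ≤ M := by
  obtain ⟨w, hw, -⟩ := hΩ.exists_mem
  refine ⟨|u w| + B * (1 + 2 * ε), fun z hz => ?_⟩
  have hzw : |u z - u w| ≤ B * (1 + 2 * ε) := (hu.abs_sub_le hΩ hε hz hw).trans
    (mul_le_mul_of_nonneg_left (hΩ.norm_sub_le_one_add hz hw) (hu.nonneg hΩ))
  linarith [abs_sub_abs_le_abs_sub (u z) (u w)]

lemma integrableOn_cross (hε : ε ≤ 1) (s : ℝ) :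
    IntegrableOn (fun y => u (mkPt m s y)) (cross Ω s) := by
  obtain ⟨M, hM⟩ := hu.exists_abs_le hΩ hε
  have hcross := measurableSet_cross hΩ.isOpen.measurableSet s
  exact IntegrableOn.of_bound (hΩ.volume_cross_ne_top s).lt_top
    ((hu.continuousOn.comp (continuous_mkPt_right s).continuousOn
      fun _ hy => hy).aestronglyMeasurable hcross) M
    ((ae_restrict_mem hcross).mono fun y hy => hM _ hy)

lemma integrableOn (hε : ε ≤ 1) : IntegrableOn u Ω := by
  obtain ⟨M, hM⟩ := hu.exists_abs_le hΩ hε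
  exact IntegrableOn.of_bound hΩ.volume_ne_top.lt_top
    (hu.continuousOn.aestronglyMeasurable hΩ.isOpen.measurableSet) M
    ((ae_restrict_mem hΩ.isOpen.measurableSet).mono hM)

lemma integrableOn_sq (hε : ε ≤ 1) : IntegrableOn (fun z => u z ^ 2) Ω := by
  obtain ⟨M, hM⟩ := hu.exists_abs_le hΩ hε
  refine IntegrableOn.of_bound hΩ.volume_ne_top.lt_top
    ((hu.continuousOn.pow 2).aestronglyMeasurable hΩ.isOpen.measurableSet) (M ^ 2)
    ((ae_restrict_mem hΩ.isOpen.measurableSet).mono fun z hz => ?_)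
  rw [norm_pow]
  exact pow_le_pow_left₀ (norm_nonneg _) (hM z hz) 2

lemma integrableOn_norm_gradient_sq (hε : ε ≤ 1) : IntegrableOn (fun z => ‖gradient u z‖ ^ 2) Ω :=
  IntegrableOn.of_bound hΩ.volume_ne_top.lt_top
    ((measurable_gradient u).norm.pow_const 2).aestronglyMeasurable (B ^ 2)
    ((ae_restrict_mem hΩ.isOpen.measurableSet).mono fun z hz => by
      rw [norm_pow, norm_norm]
      exact pow_le_pow_left₀ (norm_nonneg _) (hu.norm_gradient_le_const hΩ hε hz) 2)

lemma setIntegral_norm_gradient_sq_le (hε : ε ≤ 1) :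
    ∫ z in Ω, ‖gradient u z‖ ^ 2 ≤ B ^ 2 * volume.real Ω := by
  refine (setIntegral_mono_on (hu.integrableOn_norm_gradient_sq hΩ hε)
    (integrableOn_const hΩ.volume_ne_top) hΩ.isOpen.measurableSet fun z hz =>
    pow_le_pow_left₀ (norm_nonneg _) (hu.norm_gradient_le_const hΩ hε hz) 2).trans_eq ?_
  rw [setIntegral_const, smul_eq_mul, mul_comm]

lemma abs_ubarFn_sub_le (hε : ε ≤ 1) (hs : s ∈ Ioo (0 : ℝ) 1)
    {z : EuclideanSpace ℝ (Fin (m + 1))} (hz : z ∈ Ω) :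
    |ubarFn Ω u s - u z| ≤ B * (|s - z 0| + 2 * ε) := by
  rw [ubarFn_eq_setAverage]
  refine abs_setAverage_sub_le (measurableSet_cross hΩ.isOpen.measurableSet s) (hΩ.ωvol_pos hs)
    (hu.integrableOn_cross hΩ hε s) fun y hy => ?_
  refine (hu.abs_sub_le hΩ hε hy hz).trans (mul_le_mul_of_nonneg_left ?_ (hu.nonneg hΩ))
  simpa using hΩ.norm_sub_le hy hz

lemma abs_ubarFn_comp_homothety_sub_le (hε : ε ≤ 1) (hp : p ∈ closure Ω) (hp0 : p 0 = 0)
    {τ : ℝ} (hτ : 0 < τ) (hτ1 : τ < 1) (hs : s ∈ Ioo (0 : ℝ) 1) :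
    |ubarFn Ω (fun z => u (AffineMap.homothety p τ z)) s - ubarFn Ω u (τ * s)| ≤
      4 * ε * B * max (min (τ * s) (1 - τ * s)) ε * (m * (1 - τ) / (1 - s)) := by
  have hτs : τ * s ∈ Ioo (0 : ℝ) 1 := ⟨mul_pos hτ hs.1, mul_lt_one_of_nonneg_of_lt_one_left
    hτ.le hτ1 hs.2.le⟩
  have hmul : AffineMap.homothety (p 0) τ s = τ * s := by simp [AffineMap.homothety_apply, hp0]
  have hcross := measurableSet_cross hΩ.isOpen.measurableSet s
  set A := AffineMap.homothety (tailPt m p) τ '' cross Ω s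
  have hA : MeasurableSet A :=
    (AffineMap.homothety_isOpenMap _ τ hτ.ne' _ (isOpen_cross hΩ.isOpen s)).measurableSet
  have hAvol : volume.real A = τ ^ m * ωvol Ω s := by
    rw [measureReal_image_homothety hτ.le, finrank_euclideanSpace_fin]
    rfl
  have hAsub : A ⊆ cross Ω (τ * s) := hmul ▸ hΩ.image_homothety_cross_subset hp hτ hτ1.le s
  obtain ⟨y₀, hy₀⟩ := hΩ.cross_nonempty _ hτs
  have havg : ubarFn Ω (fun z => u (AffineMap.homothety p τ z)) s =
      ⨍ y in A, u (mkPt m (τ * s) y) := by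
    rw [ubarFn_eq_setAverage, setAverage_image_homothety hcross hτ]
    simp only [homothety_mkPt, hmul]
  rw [havg, ubarFn_eq_setAverage]
  refine (abs_setAverage_sub_setAverage_le hAsub hA
    (measurableSet_cross hΩ.isOpen.measurableSet _) (hΩ.volume_cross_ne_top _)
    (hAvol ▸ mul_pos (pow_pos hτ m) (hΩ.ωvol_pos hs)) (hu.integrableOn_cross hΩ hε _)
    fun y hy => hu.abs_sub_le_of_coord_zero_eq hΩ hy hy₀ (mkPt_zero ..) (mkPt_zero ..)).trans ?_
  have hB := hu.nonneg hΩ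
  have hε0 := hΩ.pos
  rw [hAvol]
  exact (mul_le_mul_of_nonneg_left (hΩ.ωvol_ratio_le hτ hτ1 hs) (by positivity)).trans_eq (by ring)

lemma abs_comp_homothety_sub_le (hε : ε ≤ 1) (hp : p ∈ closure Ω) (hp0 : p 0 = 0) {τ : ℝ}
    (hτ : 0 < τ) (hτ1 : τ ≤ 1) {z : EuclideanSpace ℝ (Fin (m + 1))} (hz : z ∈ Ω) :
    |u (AffineMap.homothety p τ z) - u z| ≤ B * (z 0 + 2 * ε) * (1 - τ) := by
  have hmem := homothety_mem_of_mem_closure hΩ.convex hΩ.isOpen hp hτ hτ1 hz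
  have hdist : ‖AffineMap.homothety p τ z - z‖ = ‖z - p‖ * (1 - τ) := by
    rw [← dist_eq_norm, dist_homothety_self, Real.norm_of_nonneg (sub_nonneg.2 hτ1), dist_comm,
      dist_eq_norm, mul_comm]
  have hnorm := hΩ.norm_sub_le_of_coord_zero_eq_zero hz hp hp0
  have hB := hu.nonneg hΩ
  calc |u (AffineMap.homothety p τ z) - u z| ≤ B * ‖AffineMap.homothety p τ z - z‖ :=
        hu.abs_sub_le hΩ hε hmem hz
    _ ≤ B * (z 0 + 2 * ε) * (1 - τ) := by
        rw [hdist, ← mul_assoc]; gcongr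

lemma integrableOn_cross_comp_homothety (hε : ε ≤ 1) (hp : p ∈ closure Ω) {τ : ℝ} (hτ : 0 < τ)
    (hτ1 : τ ≤ 1) (s : ℝ) :
    IntegrableOn (fun y => u (AffineMap.homothety p τ (mkPt m s y))) (cross Ω s) := by
  obtain ⟨M, hM⟩ := hu.exists_abs_le hΩ hε
  have hcross := measurableSet_cross hΩ.isOpen.measurableSet s
  have hmem : ∀ y ∈ cross Ω s, AffineMap.homothety p τ (mkPt m s y) ∈ Ω := fun y hy =>
    homothety_mem_of_mem_closure hΩ.convex hΩ.isOpen hp hτ hτ1 hy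
  have hcont : Continuous fun y => AffineMap.homothety p τ (mkPt m s y) :=
    (AffineMap.homothety p τ).continuous_of_finiteDimensional.comp (continuous_mkPt_right s)
  exact IntegrableOn.of_bound (hΩ.volume_cross_ne_top s).lt_top
    ((hu.continuousOn.comp hcont.continuousOn hmem).aestronglyMeasurable hcross) M
    ((ae_restrict_mem hcross).mono fun y hy => hM _ (hmem y hy))

lemma abs_slope_comp_homothety_le (hε : ε ≤ 1) (hp : p ∈ closure Ω) (hp0 : p 0 = 0) {τ : ℝ}
    (hτ : τ ∈ Ioo (0 : ℝ) 1) {z : EuclideanSpace ℝ (Fin (m + 1))} (hz : z ∈ Ω) :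
    |slope (fun τ : ℝ => u (AffineMap.homothety p τ z)) 1 τ| ≤ B * (z 0 + 2 * ε) := by
  have hpos : 0 < 1 - τ := sub_pos.2 hτ.2
  have hden : |τ - 1| = 1 - τ := by rw [abs_sub_comm, abs_of_pos hpos]
  have hle := hu.abs_comp_homothety_sub_le hΩ hε hp hp0 hτ.1 hτ.2.le hz
  rw [slope_def_field, abs_div, hden, div_le_iff₀ hpos]
  simpa using hle

lemma hasDerivWithinAt_ubarFn_comp_homothety (hε : ε ≤ 1) (hp : p ∈ closure Ω) (hp0 : p 0 = 0)
    (s : ℝ) :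
    HasDerivWithinAt (fun τ : ℝ => ubarFn Ω (fun z => u (AffineMap.homothety p τ z)) s)
      (ubarFn Ω (fun z => ⟪gradient u z, z - p⟫) s) (Iio 1) 1 := by
  have hint {τ : ℝ} (hτ : 0 < τ) (hτ1 : τ ≤ 1) :=
    hu.integrableOn_cross_comp_homothety hΩ hε hp hτ hτ1 s
  have hcross := measurableSet_cross hΩ.isOpen.measurableSet s
  have hnear : ∀ᶠ τ : ℝ in 𝓝[<] 1, τ ∈ Ioo (0 : ℝ) 1 := Ioo_mem_nhdsLT zero_lt_one
  suffices h : HasDerivWithinAt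
      (fun τ : ℝ => ∫ y in cross Ω s, u (AffineMap.homothety p τ (mkPt m s y)))
      (∫ y in cross Ω s, ⟪gradient u (mkPt m s y), mkPt m s y - p⟫) (Iio 1) 1 from h.div_const _
  rw [hasDerivWithinAt_iff_tendsto_slope' self_notMem_Iio]
  have hslope : ∀ᶠ τ : ℝ in 𝓝[<] 1,
      ∫ y in cross Ω s, slope (fun τ : ℝ => u (AffineMap.homothety p τ (mkPt m s y))) 1 τ =
        slope (fun τ : ℝ => ∫ y in cross Ω s, u (AffineMap.homothety p τ (mkPt m s y))) 1 τ := by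
    filter_upwards [hnear] with τ hτ
    simp only [slope, vsub_eq_sub]
    rw [integral_smul, integral_sub (hint hτ.1 hτ.2.le) (hint one_pos le_rfl)]
  refine Tendsto.congr' hslope (tendsto_integral_filter_of_dominated_convergence
    (fun _ => B * (s + 2 * ε)) ?_ ?_ ?_ ?_)
  · filter_upwards [hnear] with τ hτ
    exact (((hint hτ.1 hτ.2.le).sub (hint one_pos le_rfl)).smul (τ - 1)⁻¹).aestronglyMeasurable
  · filter_upwards [hnear] with τ hτ
    exact (ae_restrict_mem hcross).mono fun y hy =>
      (hu.abs_slope_comp_homothety_le hΩ hε hp hp0 hτ hy).trans_eq (by rw [mkPt_zero])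
  · exact integrableOn_const (hΩ.volume_cross_ne_top s)
  · exact (ae_restrict_mem hcross).mono fun y hy =>
      (hasDerivWithinAt_iff_tendsto_slope' self_notMem_Iio).1
        (hasDerivAt_comp_homothety (hu.differentiableAt _ hy) p).hasDerivWithinAt

lemma abs_mul_sub_ubarFn_inner_le (hε : ε ≤ 1) (hp : p ∈ closure Ω) (hp0 : p 0 = 0)
    (hs : s ∈ Ioo ε (1 - ε)) {d : ℝ} (hd : HasDerivAt (ubarFn Ω u) d s) :
    |s * d - ubarFn Ω (fun z => ⟪gradient u z, z - p⟫) s| ≤ 8 * m * ε * B * s := by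
  have hs0 : 0 < s := hΩ.pos.trans hs.1
  have hs1 : 0 < 1 - s := by linarith [hs.2, hΩ.pos]
  have hscale : HasDerivAt (fun τ => ubarFn Ω u (τ * s)) (s * d) 1 := by
    rw [mul_comm]
    simpa [Function.comp_def] using HasDerivAt.comp (1 : ℝ) (h₂ := ubarFn Ω u) (by simpa using hd)
      ((hasDerivAt_id (1 : ℝ)).mul_const s)
  have hG := hscale.hasDerivWithinAt.sub
    (hu.hasDerivWithinAt_ubarFn_comp_homothety hΩ hε hp hp0 s)
  set c : ℝ → ℝ := fun τ => 4 * ε * B * max (min (τ * s) (1 - τ * s)) ε * (m / (1 - s)) with hc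
  have hclim : Tendsto c (𝓝[<] 1) (𝓝 (c 1)) :=
    (Continuous.tendsto (by fun_prop) 1).mono_left nhdsWithin_le_nhds
  have hmin : max (min s (1 - s)) ε ≤ 2 * s * (1 - s) := by
    have hmin_eq : max (min s (1 - s)) ε = min s (1 - s) :=
      max_eq_left (le_min hs.1.le (by linarith [hs.2]))
    rw [hmin_eq]
    rcases le_total s (1 - s) with h | h
    · rw [min_eq_left h]; nlinarith
    · rw [min_eq_right h]; nlinarith
  refine (abs_le_of_hasDerivWithinAt_Iio hG hclim ?_).trans ?_
  · filter_upwards [Ioo_mem_nhdsLT zero_lt_one] with τ hτ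
    have hle := hu.abs_ubarFn_comp_homothety_sub_le hΩ hε hp hp0 hτ.1 hτ.2
      ⟨hs0, sub_pos.1 hs1⟩
    simp only [Pi.sub_apply, one_mul, AffineMap.homothety_one, AffineMap.id_apply, sub_self,
      sub_zero]
    rw [abs_sub_comm]
    exact hle.trans_eq (by rw [hc]; ring)
  · have hB := hu.nonneg hΩ
    have hε0 := hΩ.pos
    calc c 1 ≤ 4 * ε * B * (2 * s * (1 - s)) * (m / (1 - s)) := by
          rw [hc]; simp only [one_mul]; gcongr
      _ = 8 * m * ε * B * s := by field_simp; ring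

lemma abs_ubarFn_comp_homothety_sub_ubarFn_le (hε : ε ≤ 1) (hp : p ∈ closure Ω) (hp0 : p 0 = 0)
    {τ : ℝ} (hτ : 0 < τ) (hτ1 : τ ≤ 1) (hs : s ∈ Ioo (0 : ℝ) 1) :
    |ubarFn Ω (fun z => u (AffineMap.homothety p τ z)) s - ubarFn Ω u s| ≤
      B * (s + 2 * ε) * (1 - τ) := by
  have hf := hu.integrableOn_cross_comp_homothety hΩ hε hp hτ hτ1 s
  have hg := hu.integrableOn_cross hΩ hε s
  have hsub : ubarFn Ω (fun z => u (AffineMap.homothety p τ z)) s - ubarFn Ω u s =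
      ubarFn Ω (fun z => u (AffineMap.homothety p τ z) - u z) s := by
    rw [ubarFn, ubarFn, ubarFn, ← sub_div, integral_sub hf hg]
  rw [hsub, ubarFn_eq_setAverage, ← sub_zero (⨍ y in cross Ω s, _)]
  refine abs_setAverage_sub_le (measurableSet_cross hΩ.isOpen.measurableSet s) (hΩ.ωvol_pos hs)
    (hf.sub hg) fun y hy => ?_
  rw [sub_zero]
  exact (hu.abs_comp_homothety_sub_le hΩ hε hp hp0 hτ hτ1 hy).trans_eq (by rw [mkPt_zero])

lemma abs_ubarFn_sub_ubarFn_le (ht : ε ≤ t) (hts : t < s) (hs : s ≤ 1 - ε) :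
    |ubarFn Ω u s - ubarFn Ω u t| ≤ (3 * B + 4 * m * B / ε) * (s - t) := by
  have hε0 := hΩ.pos
  have hB := hu.nonneg hΩ
  have ht0 : 0 < t := hε0.trans_le ht
  have hs0 : 0 < s := ht0.trans hts
  have hst : 0 < s - t := sub_pos.2 hts
  have hε : ε ≤ 1 := by linarith
  have hsI : s ∈ Ioo (0 : ℝ) 1 := ⟨hs0, by linarith⟩
  obtain ⟨p, hp, hp0⟩ := hΩ.exists_mem_closure (left_mem_Icc.2 zero_le_one)
  have hτ1 : t / s < 1 := (div_lt_one hs0).2 hts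
  have hscale := hu.abs_ubarFn_comp_homothety_sub_ubarFn_le hΩ hε hp hp0 (div_pos ht0 hs0)
    hτ1.le hsI
  have hsection := hu.abs_ubarFn_comp_homothety_sub_le hΩ hε hp hp0 (div_pos ht0 hs0) hτ1 hsI
  rw [one_sub_div hs0.ne'] at hscale hsection
  rw [div_mul_cancel₀ t hs0.ne'] at hsection
  have hscale_bound : B * (s + 2 * ε) * ((s - t) / s) ≤ 3 * B * (s - t) := by
    rw [← mul_div_assoc, div_le_iff₀ hs0]
    nlinarith [mul_nonneg (mul_nonneg hB hst.le) (sub_nonneg.2 (ht.trans hts.le))]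
  have hsection_bound : 4 * ε * B * max (min t (1 - t)) ε * (m * ((s - t) / s) / (1 - s)) ≤
      4 * m * B / ε * (s - t) := by
    have hmax : max (min t (1 - t)) ε ≤ 1 := max_le ((min_le_left _ _).trans (by linarith)) hε
    calc 4 * ε * B * max (min t (1 - t)) ε * (m * ((s - t) / s) / (1 - s))
        ≤ 4 * ε * B * 1 * (m * ((s - t) / ε) / ε) := by
          gcongr
          · exact div_nonneg (by positivity) (by linarith)
          all_goals linarith
      _ = 4 * m * B / ε * (s - t) := by field_simp
  calc |ubarFn Ω u s - ubarFn Ω u t| ≤ _ := _root_.abs_sub_le _ _ _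
    _ ≤ 3 * B * (s - t) + 4 * m * B / ε * (s - t) := add_le_add
        ((abs_sub_comm _ _).trans_le (hscale.trans hscale_bound)) (hsection.trans hsection_bound)
    _ = (3 * B + 4 * m * B / ε) * (s - t) := by ring

lemma lipschitzWith_clampedAverage (hε : ε ≤ 1 / 2) :
    LipschitzWith (3 * B + 4 * m * B / ε).toNNReal (clampedAverage ε Ω u) := by
  have hB := hu.nonneg hΩ
  have hε0 := hΩ.pos
  have hK : 0 ≤ 3 * B + 4 * m * B / ε := by positivity
  have hon : LipschitzOnWith (3 * B + 4 * m * B / ε).toNNReal (ubarFn Ω u) (Icc ε (1 - ε)) := by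
    refine LipschitzOnWith.of_dist_le_mul fun s hs t ht => ?_
    rw [Real.coe_toNNReal _ hK, Real.dist_eq, Real.dist_eq]
    wlog hts : t < s generalizing s t
    · rcases (not_lt.1 hts).eq_or_lt with rfl | hst
      · simp
      · rw [abs_sub_comm, abs_sub_comm s]
        exact this t ht s hs hst
    · rw [abs_of_pos (sub_pos.2 hts)]
      exact hu.abs_ubarFn_sub_ubarFn_le hΩ ht.1 hts hs.2
  have hclamp : LipschitzWith 1 fun x => max ε (min (1 - ε) x) :=
    (LipschitzWith.id.const_min _).const_max _
  have hcomp := hon.comp (hclamp.lipschitzOnWith (s := univ)) fun x _ =>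
    ⟨le_max_left _ _, max_le (by linarith) (min_le_left _ _)⟩
  rwa [mul_one, lipschitzOnWith_univ] at hcomp

lemma abs_clampedAverage_sub_le (hε : ε ≤ 1 / 2) {z : EuclideanSpace ℝ (Fin (m + 1))}
    (hz : z ∈ Ω) : |clampedAverage ε Ω u (z 0) - u z| ≤ 3 * ε * B := by
  have hε0 := hΩ.pos
  have hz0 := hΩ.mem_Ioo z hz
  set s := max ε (min (1 - ε) (z 0))
  have hs : s ∈ Ioo (0 : ℝ) 1 := ⟨lt_max_of_lt_left hε0,
    max_lt (by linarith) (min_lt_of_right_lt hz0.2)⟩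
  have hclose : |s - z 0| ≤ ε := by
    have hlow : z 0 - ε ≤ s := le_max_of_le_right (le_min (by linarith [hz0.2]) (by linarith))
    have hup : s ≤ z 0 + ε := max_le (by linarith [hz0.1]) ((min_le_right _ _).trans (by linarith))
    exact abs_le.2 ⟨by linarith, by linarith⟩
  calc |clampedAverage ε Ω u (z 0) - u z| ≤ B * (|s - z 0| + 2 * ε) :=
        hu.abs_ubarFn_sub_le hΩ (by linarith) hs hz
    _ ≤ B * (ε + 2 * ε) := by
        have := hu.nonneg hΩ
        gcongr
    _ = 3 * ε * B := by ring

lemma inner_gradient_sub_sq_le (hp : p ∈ closure Ω) (hp0 : p 0 = 0)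
    {z : EuclideanSpace ℝ (Fin (m + 1))} (hz : z ∈ Ω) (hεz : z 0 ∈ Icc ε (1 - ε)) :
    ⟪gradient u z, z - p⟫ ^ 2 ≤ z 0 ^ 2 * (‖gradient u z‖ ^ 2 + 4 * ε ^ 2 * B ^ 2) := by
  have hgrad : ‖gradient u z‖ ^ 2 ≤ (B * z 0) ^ 2 := by
    refine pow_le_pow_left₀ (norm_nonneg _) ((hu.norm_gradient_le z hz).trans ?_) 2
    exact mul_le_mul_of_nonneg_left (max_le (min_le_left _ _) hεz.1) (hu.nonneg hΩ)
  calc ⟪gradient u z, z - p⟫ ^ 2 ≤ (‖gradient u z‖ * ‖z - p‖) ^ 2 :=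
        sq_le_sq' (neg_le_of_abs_le (abs_real_inner_le_norm _ _))
          (le_of_abs_le (abs_real_inner_le_norm _ _))
    _ ≤ ‖gradient u z‖ ^ 2 * (z 0 ^ 2 + 4 * ε ^ 2) := by
        rw [mul_pow]
        exact mul_le_mul_of_nonneg_left (hΩ.norm_sub_sq_le hz hp hp0) (sq_nonneg _)
    _ ≤ z 0 ^ 2 * (‖gradient u z‖ ^ 2 + 4 * ε ^ 2 * B ^ 2) := by
        nlinarith [mul_le_mul_of_nonneg_left hgrad (by positivity : 0 ≤ 4 * ε ^ 2)]

lemma abs_inner_gradient_sub_le (hp : p ∈ closure Ω) (hp0 : p 0 = 0)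
    {z : EuclideanSpace ℝ (Fin (m + 1))} (hz : z ∈ Ω) (hεz : z 0 ∈ Icc ε (1 - ε)) :
    |⟪gradient u z, z - p⟫| ≤ 3 * B * z 0 := by
  have hB := hu.nonneg hΩ
  have hε : ε ≤ 1 := by linarith [hεz.1, hεz.2, hΩ.pos]
  calc |⟪gradient u z, z - p⟫| ≤ ‖gradient u z‖ * ‖z - p‖ := abs_real_inner_le_norm _ _
    _ ≤ B * (z 0 + 2 * z 0) := by
        gcongr
        · exact hu.norm_gradient_le_const hΩ hε hz
        · linarith [hΩ.norm_sub_le_of_coord_zero_eq_zero hz hp hp0, hεz.1]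
    _ = 3 * B * z 0 := by ring

lemma integrableOn_cross_norm_gradient_sq (hε : ε ≤ 1) (s : ℝ) :
    IntegrableOn (fun y => ‖gradient u (mkPt m s y)‖ ^ 2) (cross Ω s) := by
  have hcross := measurableSet_cross hΩ.isOpen.measurableSet s
  refine IntegrableOn.of_bound (hΩ.volume_cross_ne_top s).lt_top
    (((measurable_gradient u).comp (continuous_mkPt_right s).measurable).norm.pow_const
      2).aestronglyMeasurable (B ^ 2) ((ae_restrict_mem hcross).mono fun y hy => ?_)
  rw [Real.norm_of_nonneg (sq_nonneg _)]
  exact pow_le_pow_left₀ (norm_nonneg _) (hu.norm_gradient_le_const hΩ hε hy) 2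

lemma integrableOn_cross_inner_gradient_pow (hp : p ∈ closure Ω) (hp0 : p 0 = 0)
    (hs : s ∈ Icc ε (1 - ε)) (k : ℕ) :
    IntegrableOn (fun y => ⟪gradient u (mkPt m s y), mkPt m s y - p⟫ ^ k) (cross Ω s) := by
  have hcross := measurableSet_cross hΩ.isOpen.measurableSet s
  have hmeas : Measurable fun y => ⟪gradient u (mkPt m s y), mkPt m s y - p⟫ :=
    ((measurable_gradient u).comp (continuous_mkPt_right s).measurable).inner
      ((continuous_mkPt_right s).measurable.sub_const p)
  refine IntegrableOn.of_bound (hΩ.volume_cross_ne_top s).lt_top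
    (hmeas.pow_const k).aestronglyMeasurable ((3 * B * s) ^ k)
    ((ae_restrict_mem hcross).mono fun y hy => ?_)
  rw [norm_pow]
  exact pow_le_pow_left₀ (norm_nonneg _) ((hu.abs_inner_gradient_sub_le hΩ hp hp0 hy
    (by rwa [mkPt_zero])).trans_eq (by rw [mkPt_zero])) k

lemma abs_ubarFn_inner_gradient_le (hp : p ∈ closure Ω) (hp0 : p 0 = 0)
    (hs : s ∈ Icc ε (1 - ε)) : |ubarFn Ω (fun z => ⟪gradient u z, z - p⟫) s| ≤ 3 * B * s := by
  have hε0 := hΩ.pos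
  have hint := hu.integrableOn_cross_inner_gradient_pow hΩ hp hp0 hs 1
  simp only [pow_one] at hint
  rw [ubarFn_eq_setAverage, ← sub_zero (⨍ y in cross Ω s, _)]
  refine abs_setAverage_sub_le (measurableSet_cross hΩ.isOpen.measurableSet s)
    (hΩ.ωvol_pos ⟨hε0.trans_le hs.1, by linarith [hs.2]⟩) hint fun y hy => ?_
  rw [sub_zero]
  exact (hu.abs_inner_gradient_sub_le hΩ hp hp0 hy (by rwa [mkPt_zero])).trans_eq
    (by rw [mkPt_zero])

lemma ωvol_mul_ubarFn_inner_gradient_sq_le (hp : p ∈ closure Ω) (hp0 : p 0 = 0)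
    (hs : s ∈ Icc ε (1 - ε)) :
    ωvol Ω s * ubarFn Ω (fun z => ⟪gradient u z, z - p⟫) s ^ 2 ≤
      s ^ 2 * ((∫ y in cross Ω s, ‖gradient u (mkPt m s y)‖ ^ 2) +
        4 * ε ^ 2 * B ^ 2 * ωvol Ω s) := by
  have hε0 := hΩ.pos
  have hint := hu.integrableOn_cross_inner_gradient_pow hΩ hp hp0 hs 1
  have hint2 := hu.integrableOn_cross_inner_gradient_pow hΩ hp hp0 hs 2
  simp only [pow_one] at hint
  have hgrad := hu.integrableOn_cross_norm_gradient_sq hΩ (by linarith [hs.1, hs.2]) s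
  have hconst : IntegrableOn (fun _ => 4 * ε ^ 2 * B ^ 2) (cross Ω s) :=
    integrableOn_const (hΩ.volume_cross_ne_top s)
  rw [ubarFn_eq_setAverage]
  calc ωvol Ω s * (⨍ y in cross Ω s, ⟪gradient u (mkPt m s y), mkPt m s y - p⟫) ^ 2
      ≤ ∫ y in cross Ω s, ⟪gradient u (mkPt m s y), mkPt m s y - p⟫ ^ 2 :=
        measureReal_mul_setAverage_sq_le
          (hΩ.ωvol_pos ⟨hε0.trans_le hs.1, by linarith [hs.2]⟩) hint hint2
    _ ≤ ∫ y in cross Ω s, s ^ 2 * (‖gradient u (mkPt m s y)‖ ^ 2 + 4 * ε ^ 2 * B ^ 2) := by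
        refine setIntegral_mono_on hint2 (Integrable.const_mul (hgrad.add hconst) (s ^ 2))
          (measurableSet_cross hΩ.isOpen.measurableSet s) fun y hy => ?_
        exact (hu.inner_gradient_sub_sq_le hΩ hp hp0 hy (by rwa [mkPt_zero])).trans_eq
          (by rw [mkPt_zero])
    _ = _ := by
        rw [integral_const_mul, integral_add hgrad hconst, setIntegral_const, smul_eq_mul,
          mul_comm (volume.real _)]
        rfl

lemma ωvol_mul_sq_le_of_hasDerivAt_ubarFn (hε : ε ≤ 1 / 4) (hs : s ∈ Ioo ε (1 - ε)) {d : ℝ}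
    (hd : HasDerivAt (ubarFn Ω u) d s) :
    ωvol Ω s * d ^ 2 ≤ (∫ y in cross Ω s, ‖gradient u (mkPt m s y)‖ ^ 2) +
      (1 + 48 * m + 16 * m ^ 2) * ε * B ^ 2 * ωvol Ω s := by
  obtain ⟨p, hp, hp0⟩ := hΩ.exists_mem_closure (left_mem_Icc.2 zero_le_one)
  have hε0 := hΩ.pos
  have hB := hu.nonneg hΩ
  have hs0 : 0 < s := hε0.trans hs.1
  have hω : 0 ≤ ωvol Ω s := ωvol_nonneg s
  have hεsq : 4 * ε ^ 2 ≤ ε := by nlinarith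
  set I := ubarFn Ω (fun z => ⟪gradient u z, z - p⟫) s
  set e := s * d - I with he
  have hclose : |e| ≤ 8 * m * ε * B * s :=
    hu.abs_mul_sub_ubarFn_inner_le hΩ (by linarith) hp hp0 hs hd
  have hI : |I| ≤ 3 * B * s :=
    hu.abs_ubarFn_inner_gradient_le hΩ hp hp0 (Ioo_subset_Icc_self hs)
  have hIsq := hu.ωvol_mul_ubarFn_inner_gradient_sq_le hΩ hp hp0 (Ioo_subset_Icc_self hs)
  have hcross_term : I * e ≤ 3 * B * s * (8 * m * ε * B * s) :=
    (le_abs_self _).trans <| (abs_mul _ _).trans_le <| by gcongr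
  have hsq : e ^ 2 ≤ (8 * m * ε * B * s) ^ 2 := sq_le_sq' (neg_le_of_abs_le hclose)
    (le_of_abs_le hclose)
  have herror : 2 * (I * e) + e ^ 2 ≤ s ^ 2 * ((48 * m + 16 * m ^ 2) * ε * B ^ 2) := by
    have : 64 * m ^ 2 * B ^ 2 * s ^ 2 * ε ^ 2 ≤ 16 * m ^ 2 * B ^ 2 * s ^ 2 * ε := by
      nlinarith [mul_le_mul_of_nonneg_left hεsq (by positivity : 0 ≤ 16 * m ^ 2 * B ^ 2 * s ^ 2)]
    linarith
  refine le_of_mul_le_mul_left ?_ (pow_pos hs0 2)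
  calc s ^ 2 * (ωvol Ω s * d ^ 2) = ωvol Ω s * I ^ 2 + ωvol Ω s * (2 * (I * e) + e ^ 2) := by
        rw [he]; ring
    _ ≤ s ^ 2 * ((∫ y in cross Ω s, ‖gradient u (mkPt m s y)‖ ^ 2) +
          ε * B ^ 2 * ωvol Ω s) +
        ωvol Ω s * (s ^ 2 * ((48 * m + 16 * m ^ 2) * ε * B ^ 2)) := by
      refine add_le_add (hIsq.trans ?_) (mul_le_mul_of_nonneg_left herror hω)
      gcongr
    _ = _ := by ring

lemma ωvol_mul_deriv_clampedAverage_sq_le (hε : ε ≤ 1 / 4) (hsε : s ≠ ε) (hsε' : s ≠ 1 - ε) :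
    ωvol Ω s * deriv (clampedAverage ε Ω u) s ^ 2 ≤
      (∫ y in cross Ω s, ‖gradient u (mkPt m s y)‖ ^ 2) +
        (1 + 48 * m + 16 * m ^ 2) * ε * B ^ 2 * ωvol Ω s := by
  have hzero : ωvol Ω s * 0 ^ 2 ≤ (∫ y in cross Ω s, ‖gradient u (mkPt m s y)‖ ^ 2) +
      (1 + 48 * m + 16 * m ^ 2) * ε * B ^ 2 * ωvol Ω s := by
    have hω : 0 ≤ ωvol Ω s := ωvol_nonneg s
    have hε0 := hΩ.pos
    have hgrad : 0 ≤ ∫ y in cross Ω s, ‖gradient u (mkPt m s y)‖ ^ 2 :=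
      integral_nonneg fun _ => sq_nonneg _
    rw [zero_pow two_ne_zero, mul_zero]
    exact add_nonneg hgrad (by positivity)
  by_cases hs : s ∈ Icc ε (1 - ε)
  · have hs' : s ∈ Ioo ε (1 - ε) := ⟨hs.1.lt_of_ne' hsε, hs.2.lt_of_ne hsε'⟩
    rw [deriv_clampedAverage_of_mem_Ioo hs']
    by_cases hd : DifferentiableAt ℝ (ubarFn Ω u) s
    · exact hu.ωvol_mul_sq_le_of_hasDerivAt_ubarFn hΩ hε hs' hd.hasDerivAt
    · rwa [deriv_zero_of_not_differentiableAt hd]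
  · rwa [deriv_clampedAverage_of_notMem_Icc hs]

lemma intervalIntegral_ωvol_mul_deriv_clampedAverage_sq_le (hε : ε ≤ 1 / 4) :
    ∫ s in (0 : ℝ)..1, ωvol Ω s * deriv (clampedAverage ε Ω u) s ^ 2 ≤
      (∫ z in Ω, ‖gradient u z‖ ^ 2) +
        (1 + 48 * m + 16 * m ^ 2) * ε * B ^ 2 * volume.real Ω := by
  set c := (1 + 48 * m + 16 * m ^ 2) * ε * B ^ 2
  have hmeas := hΩ.isOpen.measurableSet
  have hgrad := hu.integrableOn_norm_gradient_sq hΩ (by linarith)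
  have hconst : IntegrableOn (fun _ => c) Ω := integrableOn_const hΩ.volume_ne_top
  have hfub := setIntegral_eq_intervalIntegral_cross hmeas hΩ.mem_Ioo (hgrad.add hconst)
  have hslice (s : ℝ) : ∫ y in cross Ω s, (‖gradient u (mkPt m s y)‖ ^ 2 + c) =
      (∫ y in cross Ω s, ‖gradient u (mkPt m s y)‖ ^ 2) + c * ωvol Ω s := by
    rw [integral_add (hu.integrableOn_cross_norm_gradient_sq hΩ (by linarith) s)
      (integrableOn_const (hΩ.volume_cross_ne_top s)), setIntegral_const, smul_eq_mul,
      mul_comm (volume.real _)]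
    rfl
  calc ∫ s in (0 : ℝ)..1, ωvol Ω s * deriv (clampedAverage ε Ω u) s ^ 2
      ≤ ∫ s in (0 : ℝ)..1, ∫ y in cross Ω s, (‖gradient u (mkPt m s y)‖ ^ 2 + c) := by
        rw [intervalIntegral.integral_of_le zero_le_one,
          intervalIntegral.integral_of_le zero_le_one]
        refine integral_mono_of_nonneg
          (Eventually.of_forall fun s => mul_nonneg (ωvol_nonneg s) (sq_nonneg _))
          (integrable_integral_cross hmeas (hgrad.add hconst)).integrableOn
          (ae_restrict_of_ae ?_)
        filter_upwards [(toFinite {ε, 1 - ε}).countable.ae_notMem volume] with s hs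
        simp only [mem_insert_iff, mem_singleton_iff, not_or] at hs
        rw [hslice]
        exact hu.ωvol_mul_deriv_clampedAverage_sq_le hΩ hε hs.1 hs.2
    _ = ∫ z in Ω, (‖gradient u z‖ ^ 2 + c) := hfub.symm
    _ = _ := by
        rw [integral_add hgrad hconst, setIntegral_const, smul_eq_mul, mul_comm (volume.real _)]

lemma exists_lipschitzWith_test_function (hε : ε ≤ 1 / 4) (hmean : ∫ z in Ω, u z = 0) :
    ∃ g : ℝ → ℝ, (∃ K, LipschitzWith K g) ∧ ∫ s in (0 : ℝ)..1, ωvol Ω s * g s = 0 ∧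
      (∀ z ∈ Ω, |g (z 0) - u z| ≤ 6 * ε * B) ∧
      ∫ s in (0 : ℝ)..1, ωvol Ω s * deriv g s ^ 2 ≤ (∫ z in Ω, ‖gradient u z‖ ^ 2) +
        (1 + 48 * m + 16 * m ^ 2) * ε * B ^ 2 * volume.real Ω := by
  have hmeas := hΩ.isOpen.measurableSet
  have hlip := hu.lipschitzWith_clampedAverage hΩ (by linarith)
  have hclose {z} (hz : z ∈ Ω) := hu.abs_clampedAverage_sub_le hΩ (by linarith) hz
  have hint := integrableOn_comp_coord_zero hΩ.volume_ne_top hmeas hΩ.mem_Ioo hlip.continuous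
  set a := ⨍ z in Ω, clampedAverage ε Ω u (z 0)
  have hg : LipschitzWith (3 * B + 4 * m * B / ε).toNNReal fun x => clampedAverage ε Ω u x - a :=
    LipschitzWith.of_dist_le_mul fun x y => by
      simpa only [dist_sub_right] using hlip.dist_le_mul x y
  have ha_le : |a| ≤ 3 * ε * B := by
    have hdiff := abs_setAverage_sub_le hmeas hΩ.volume_pos
      (φ := fun z => clampedAverage ε Ω u (z 0) - u z)
      (hint.sub (hu.integrableOn hΩ (by linarith))) (c := 0)
      fun z hz => by simpa only [sub_zero] using hclose hz
    rwa [sub_zero, setAverage_eq, integral_sub hint (hu.integrableOn hΩ (by linarith)), hmean,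
      sub_zero, ← setAverage_eq] at hdiff
  refine ⟨fun x => clampedAverage ε Ω u x - a, ⟨_, hg⟩, ?_, fun z hz => ?_, ?_⟩
  · rw [← setIntegral_comp_coord_zero hΩ.volume_ne_top hmeas hΩ.mem_Ioo hg.continuous]
    exact setAverage_sub_setAverage hΩ.volume_ne_top _
  · have hsplit := abs_sub_le_iff.1 (hclose hz)
    have ha_split := abs_le.1 ha_le
    exact abs_le.2 ⟨by linarith, by linarith⟩
  · simp only [deriv_sub_const]
    exact hu.intervalIntegral_ωvol_mul_deriv_clampedAverage_sq_le hΩ hε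

theorem weightedNeumannEigenvalue_mul_sub_le (hε : ε ≤ 1 / 4) (hmean : ∫ z in Ω, u z = 0) {M : ℝ}
    (hM : ∀ z ∈ Ω, |u z| ≤ M) :
    weightedNeumannEigenvalue (ωvol Ω) *
        ((∫ z in Ω, u z ^ 2) - 12 * ε * B * M * volume.real Ω) ≤
      (∫ z in Ω, ‖gradient u z‖ ^ 2) +
        (1 + 48 * m + 16 * m ^ 2) * ε * B ^ 2 * volume.real Ω := by
  have hmeas := hΩ.isOpen.measurableSet
  obtain ⟨g, ⟨K, hg⟩, hg0, hclose, henergy⟩ :=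
    hu.exists_lipschitzWith_test_function hΩ hε hmean
  have hg2 : Continuous fun x => g x ^ 2 := hg.continuous.pow 2
  have hmass : (∫ z in Ω, u z ^ 2) - 12 * ε * B * M * volume.real Ω ≤
      ∫ s in (0 : ℝ)..1, ωvol Ω s * g s ^ 2 := by
    rw [← setIntegral_comp_coord_zero hΩ.volume_ne_top hmeas hΩ.mem_Ioo hg2]
    refine le_trans (le_of_eq (by ring)) (setIntegral_sq_sub_le_of_abs_sub_le hmeas
      hΩ.volume_ne_top (integrableOn_comp_coord_zero hΩ.volume_ne_top hmeas hΩ.mem_Ioo hg2)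
      (hu.integrableOn_sq hΩ (by linarith)) hclose hM)
  exact (mul_le_mul_of_nonneg_left hmass (weightedNeumannEigenvalue_nonneg ωvol_nonneg)).trans
    ((weightedNeumannEigenvalue_mul_le ωvol_nonneg hg hg0).trans henergy)

lemma sq_mul_pow_mul_volume_le_setIntegral_sq (hε : ε ≤ 1 / 2)
    {w : EuclideanSpace ℝ (Fin (m + 1))} (hw : w ∈ Ω) {δ b : ℝ} (hδ : 0 < δ) (hδ1 : δ ≤ 1)
    (hb : 0 ≤ b) (hle : b + 2 * B * δ ≤ |u w|) :
    b ^ 2 * (δ ^ (m + 1) * volume.real Ω) ≤ ∫ z in Ω, u z ^ 2 := by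
  set A := AffineMap.homothety w δ '' Ω
  have hAΩ : A ⊆ Ω := image_subset_iff.2 fun _ hz =>
    homothety_mem_of_mem_closure hΩ.convex hΩ.isOpen (subset_closure hw) hδ hδ1 hz
  have hA : MeasurableSet A :=
    (AffineMap.homothety_isOpenMap w δ hδ.ne' Ω hΩ.isOpen).measurableSet
  have hAvol : volume.real A = δ ^ (m + 1) * volume.real Ω := by
    rw [measureReal_image_homothety hδ.le, finrank_euclideanSpace_fin]
  have hsq := hu.integrableOn_sq hΩ (by linarith)
  have hpt : ∀ z ∈ A, b ^ 2 ≤ u z ^ 2 := by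
    rintro _ ⟨z, hz, rfl⟩
    have hdist : ‖w - AffineMap.homothety w δ z‖ ≤ δ * 2 := by
      rw [← dist_eq_norm, dist_center_homothety, Real.norm_of_nonneg hδ.le, dist_eq_norm]
      exact mul_le_mul_of_nonneg_left
        ((hΩ.norm_sub_le_one_add hw hz).trans (by linarith)) hδ.le
    have hlip : |u w - u (AffineMap.homothety w δ z)| ≤ B * (δ * 2) :=
      (hu.abs_sub_le hΩ (by linarith) hw (hAΩ ⟨z, hz, rfl⟩)).trans
        (mul_le_mul_of_nonneg_left hdist (hu.nonneg hΩ))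
    rw [← sq_abs (u _)]
    refine pow_le_pow_left₀ hb ?_ 2
    linarith [abs_sub_abs_le_abs_sub (u w) (u (AffineMap.homothety w δ z))]
  calc b ^ 2 * (δ ^ (m + 1) * volume.real Ω) = ∫ _ in A, b ^ 2 := by
        rw [setIntegral_const, smul_eq_mul, hAvol, mul_comm]
    _ ≤ ∫ z in A, u z ^ 2 := setIntegral_mono_on
        (integrableOn_const (measure_ne_top_of_subset hAΩ hΩ.volume_ne_top))
        (hsq.mono_set hAΩ) hA hpt
    _ ≤ ∫ z in Ω, u z ^ 2 := setIntegral_mono_set hsq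
        (Eventually.of_forall fun z => sq_nonneg _) hAΩ.eventuallyLE

end HasThinGradientBound

lemma HasThinGradientBound.sq_mul_volume_le_setIntegral_sq {C₀ M : ℝ}
    (hu : HasThinGradientBound ε (C₀ * M) Ω u) (hΩ : IsThinConvex ε Ω) (hε : ε ≤ 1 / 2)
    (hM : IsLUB ((fun z => |u z|) '' Ω) M) (hM0 : 0 < M) :
    M ^ 2 * volume.real Ω ≤ 4 * (8 * (C₀ + 1)) ^ (m + 1) * ∫ z in Ω, u z ^ 2 := by
  have hC₀ : 0 ≤ C₀ := nonneg_of_mul_nonneg_left (hu.nonneg hΩ) hM0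
  obtain ⟨_, ⟨w, hw, rfl⟩, hwM⟩ := (lt_isLUB_iff hM).1 (show 3 / 4 * M < M by linarith)
  set K := 8 * (C₀ + 1)
  have : 8 ≤ K := by simp only [K]; linarith
  have hsmall : M / 2 + 2 * (C₀ * M) * K⁻¹ ≤ |u w| := by
    have hC₀K : C₀ * K⁻¹ ≤ 1 / 8 := by
      rw [← div_eq_mul_inv, div_le_iff₀ (by linarith)]
      simp only [K]
      linarith
    nlinarith
  have hlower := hu.sq_mul_pow_mul_volume_le_setIntegral_sq hΩ hε hw (inv_pos.2 (by linarith))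
    (inv_le_one_of_one_le₀ (by linarith)) (by linarith) hsmall
  calc M ^ 2 * volume.real Ω
      = 4 * K ^ (m + 1) * ((M / 2) ^ 2 * (K⁻¹ ^ (m + 1) * volume.real Ω)) := by
        have hcancel : K ^ (m + 1) * K⁻¹ ^ (m + 1) = 1 := by
          rw [← mul_pow, mul_inv_cancel₀ (by linarith), one_pow]
        linear_combination -(M ^ 2 * volume.real Ω) * hcancel
    _ ≤ _ := mul_le_mul_of_nonneg_left hlower (by positivity)

lemma le_div_add_of_mul_one_sub_mul_le {μ U E a b ε Λ : ℝ} (hU : 0 < U) (haε : 0 ≤ a * ε)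
    (hbε0 : 0 ≤ b * ε) (hbε : b * ε ≤ 1 / 2) (hE0 : 0 ≤ E) (hE : E ≤ Λ * U)
    (hμ : μ * ((1 - b * ε) * U) ≤ E + a * ε * U) :
    μ ≤ E / U + 2 * (a + b * Λ) * ε := by
  have hr : E / U ≤ Λ := (div_le_iff₀ hU).2 hE
  have hr0 : 0 ≤ E / U := div_nonneg hE0 hU.le
  have hμr : μ * (1 - b * ε) ≤ E / U + a * ε := by
    rw [← mul_assoc, ← le_div_iff₀ hU, add_div, mul_div_cancel_right₀ _ hU.ne'] at hμ
    exact hμ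
  refine le_of_mul_le_mul_right (hμr.trans ?_) (show 0 < 1 - b * ε by linarith)
  have hbΛ : b * ε * (E / U) ≤ b * ε * Λ := mul_le_mul_of_nonneg_left hr hbε0
  have hnonneg : 0 ≤ a * ε + b * ε * Λ := by
    have := mul_nonneg hbε0 (hr0.trans hr)
    linarith
  nlinarith

theorem HasThinGradientBound.weightedNeumannEigenvalue_le_rayleigh_add {C₀ M κ : ℝ}
    (hu : HasThinGradientBound ε (C₀ * M) Ω u) (hΩ : IsThinConvex ε Ω) (hε : ε ≤ 1 / 4)
    (hmean : ∫ z in Ω, u z = 0) (hM : ∀ z ∈ Ω, |u z| ≤ M) (hM0 : 0 < M)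
    (hκ : M ^ 2 * volume.real Ω ≤ κ * ∫ z in Ω, u z ^ 2) (hκε : 12 * C₀ * κ * ε ≤ 1 / 2) :
    weightedNeumannEigenvalue (ωvol Ω) ≤ rayleigh Ω u +
      2 * ((1 + 48 * m + 16 * m ^ 2) * C₀ ^ 2 * κ + 12 * C₀ * κ * (C₀ ^ 2 * κ)) * ε := by
  set U := ∫ z in Ω, u z ^ 2 with hU
  set V := volume.real Ω
  set E := ∫ z in Ω, ‖gradient u z‖ ^ 2 with hE
  have hC₀ : 0 ≤ C₀ := nonneg_of_mul_nonneg_left (hu.nonneg hΩ) hM0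
  have hε0 := hΩ.pos
  have hκU : 0 < κ * U := (mul_pos (pow_pos hM0 2) hΩ.volume_pos).trans_le hκ
  have hU0 : 0 < U := (setIntegral_nonneg hΩ.isOpen.measurableSet fun z _ =>
    sq_nonneg (u z)).lt_of_ne' (right_ne_zero_of_mul hκU.ne')
  have hκ0 : 0 < κ := pos_of_mul_pos_left hκU hU0.le
  have hE_le : E ≤ C₀ ^ 2 * κ * U := by
    calc E ≤ (C₀ * M) ^ 2 * V := hu.setIntegral_norm_gradient_sq_le hΩ (by linarith)
      _ = C₀ ^ 2 * (M ^ 2 * V) := by ring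
      _ ≤ C₀ ^ 2 * (κ * U) := by gcongr
      _ = C₀ ^ 2 * κ * U := by ring
  have hE0 : 0 ≤ E := integral_nonneg fun _ => sq_nonneg _
  rw [rayleigh, ← hE, ← hU]
  refine le_div_add_of_mul_one_sub_mul_le hU0 (by positivity) (by positivity) hκε hE0 hE_le ?_
  calc weightedNeumannEigenvalue (ωvol Ω) * ((1 - 12 * C₀ * κ * ε) * U)
      = weightedNeumannEigenvalue (ωvol Ω) * (U - 12 * ε * C₀ * (κ * U)) := by ring
    _ ≤ weightedNeumannEigenvalue (ωvol Ω) * (U - 12 * ε * C₀ * (M ^ 2 * V)) := by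
        have := weightedNeumannEigenvalue_nonneg (ωvol_nonneg (Ω := Ω))
        gcongr
    _ = weightedNeumannEigenvalue (ωvol Ω) * (U - 12 * ε * (C₀ * M) * M * V) := by ring
    _ ≤ E + (1 + 48 * m + 16 * m ^ 2) * ε * (C₀ * M) ^ 2 * V :=
        hu.weightedNeumannEigenvalue_mul_sub_le hΩ hε hmean hM
    _ = E + (1 + 48 * m + 16 * m ^ 2) * ε * C₀ ^ 2 * (M ^ 2 * V) := by ring
    _ ≤ E + (1 + 48 * m + 16 * m ^ 2) * ε * C₀ ^ 2 * (κ * U) := by gcongr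
    _ = E + (1 + 48 * m + 16 * m ^ 2) * C₀ ^ 2 * κ * ε * U := by ring

end ThinGradientBound

theorem first_neumann_eigenvalue_comparison_general (m : ℕ) {C₀ : ℝ} (hC₀ : 0 < C₀) :
    ∃ C > (0 : ℝ), ∃ ε₀ > (0 : ℝ), ∀ (ε : ℝ) (Ω : Set (EuclideanSpace ℝ (Fin (m + 1))))
      (u : EuclideanSpace ℝ (Fin (m + 1)) → ℝ), ε < ε₀ → IsThinConvex ε Ω →
      HasThinGradientBound ε (C₀ * sSup ((fun z => |u z|) '' Ω)) Ω u →
      (∃ z ∈ Ω, u z ≠ 0) → ∫ z in Ω, u z = 0 →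
      neumannEigenvalue Ω ≤ weightedNeumannEigenvalue (ωvol Ω) ∧
        weightedNeumannEigenvalue (ωvol Ω) ≤ rayleigh Ω u + C * ε := by
  set κ := 4 * (8 * (C₀ + 1)) ^ (m + 1)
  refine ⟨2 * ((1 + 48 * m + 16 * m ^ 2) * C₀ ^ 2 * κ + 12 * C₀ * κ * (C₀ ^ 2 * κ)),
    by positivity, min (1 / 4) (1 / 2 / (12 * C₀ * κ)), by positivity,
    fun ε Ω u hε hΩ hu ⟨z, hz, hz0⟩ hmean => ⟨?_, ?_⟩⟩
  · exact neumannEigenvalue_le_weightedNeumannEigenvalue hΩ.volume_ne_top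
      hΩ.isOpen.measurableSet hΩ.mem_Ioo fun s hs => hΩ.ωvol_pos hs
  · obtain ⟨hε4, hεκ⟩ := lt_min_iff.1 hε
    obtain ⟨b, hb⟩ := hu.exists_abs_le hΩ (by linarith)
    have hM : IsLUB ((fun z => |u z|) '' Ω) (sSup ((fun z => |u z|) '' Ω)) :=
      isLUB_csSup ⟨_, mem_image_of_mem _ hz⟩ ⟨b, forall_mem_image.2 fun z hz => hb z hz⟩
    have hM0 : 0 < sSup ((fun z => |u z|) '' Ω) :=
      (abs_pos.2 hz0).trans_le (hM.1 (mem_image_of_mem _ hz))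
    exact hu.weightedNeumannEigenvalue_le_rayleigh_add hΩ hε4.le hmean
      (fun z hz => hM.1 (mem_image_of_mem _ hz)) hM0
      (hu.sq_mul_volume_le_setIntegral_sq hΩ (by linarith) hM hM0)
      (mul_comm (12 * C₀ * κ) ε ▸ ((lt_div_iff₀ (by positivity)).1 hεκ).le)

/-- For a long thin convex domain, the first nonzero Neumann eigenvalue `λ`
of the Laplacian and the first eigenvalue `μ` of the limiting ODE, characterized variationally,
satisfy `λ ≤ μ ≤ λ + Cε`, with `C` depending only on the dimension (and the constants `c₀, C₀`
of the facts from [CJK2009], which depend only on the dimension). -/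
theorem first_neumann_eigenvalue_comparison
    (m : ℕ) (hm : 1 ≤ m) (c₀ C₀ : ℝ) (hc₀ : 0 < c₀) (hC₀ : 0 < C₀) :
    ∃ C > (0:ℝ), ∃ ε₀ > (0:ℝ),
    ∀ (ε : ℝ) (Ω : Set (EuclideanSpace ℝ (Fin (m+1))))
      (u : EuclideanSpace ℝ (Fin (m+1)) → ℝ) (lam μ L0 L1 : ℝ),
      0 < ε → ε < ε₀ →
      IsOpen Ω → Convex ℝ Ω → Bornology.IsBounded Ω →
      -- smooth boundary
      (∃ F : EuclideanSpace ℝ (Fin (m+1)) → ℝ, ContDiff ℝ (⊤:ℕ∞) F ∧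
        Ω = {p | F p < 0} ∧ frontier Ω = {p | F p = 0} ∧
        ∀ p ∈ frontier Ω, gradient F p ≠ 0) →
      -- Ω ⊆ (0,1) × B^{n-1}(ε)
      (∀ x y, mkPt m x y ∈ Ω →
        x ∈ Ioo (0:ℝ) 1 ∧ y ∈ Metric.ball (0 : EuclideanSpace ℝ (Fin m)) ε) →
      -- nonempty cross-sections
      (∀ s ∈ Ioo (0:ℝ) 1, (cross Ω s).Nonempty) →
      -- u is a nonzero mean-zero smooth Neumann eigenfunction with eigenvalue lam
      ContDiffOn ℝ (⊤:ℕ∞) u (closure Ω) →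
      (∃ p ∈ Ω, u p ≠ 0) →
      (∫ p in Ω, u p) = 0 →
      (∀ p ∈ Ω, lap u p = -(lam * u p)) →
      (∀ p ∈ frontier Ω, ∀ v, (∀ z ∈ Ω, ⟪v, z - p⟫ ≤ 0) → ⟪gradient u p, v⟫ = 0) →
      0 < lam →
      -- lam is the smallest nonzero Neumann eigenvalue (variational characterization),
      -- attained at u
      lam = sInf {r | ∃ w : EuclideanSpace ℝ (Fin (m+1)) → ℝ,
        ContDiffOn ℝ (⊤:ℕ∞) w (closure Ω) ∧ (∃ p ∈ Ω, w p ≠ 0) ∧ (∫ p in Ω, w p) = 0 ∧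
        r = (∫ p in Ω, ‖gradient w p‖ ^ 2) / (∫ p in Ω, (w p) ^ 2)} →
      lam = (∫ p in Ω, ‖gradient u p‖ ^ 2) / (∫ p in Ω, (u p) ^ 2) →
      -- facts from [CJK2009], assumed as hypotheses
      (∀ p ∈ Ω, ‖gradient u p‖ ≤
        C₀ * max (min (p 0) (1 - p 0)) ε * sSup ((fun q => |u q|) '' Ω)) →
      c₀ * sSup (u '' Ω) ≤ -sInf (u '' Ω) →
      -sInf (u '' Ω) ≤ C₀ * sSup (u '' Ω) →
      Tendsto (ubarFn Ω u) (𝓝[>] 0) (𝓝 L0) →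
      (1 - C₀ * ε) * sSup (u '' Ω) ≤ L0 →
      Tendsto (ubarFn Ω u) (𝓝[<] 1) (𝓝 L1) →
      L1 ≤ (1 - C₀ * ε) * sInf (u '' Ω) →
      -- μ: variational characterization of the smallest positive Neumann
      -- eigenvalue of the ODE -(ωφ')' = μωφ
      μ = sInf {r | ∃ g : ℝ → ℝ, (∃ K, LipschitzOnWith K g (Icc 0 1)) ∧
        (∃ x ∈ Icc (0:ℝ) 1, g x ≠ 0) ∧ (∫ x in (0:ℝ)..1, ωvol Ω x * g x) = 0 ∧
        r = (∫ x in (0:ℝ)..1, ωvol Ω x * (deriv g x) ^ 2) /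
            (∫ x in (0:ℝ)..1, ωvol Ω x * (g x) ^ 2)} →
      lam ≤ μ ∧ μ ≤ lam + C * ε := by
  obtain ⟨C, hC, ε₀, hε₀, H⟩ := first_neumann_eigenvalue_comparison_general m hC₀
  refine ⟨C, hC, ε₀, hε₀, fun ε Ω u lam μ L0 L1 _ hεε₀ hopen hconv _ _ hslab hcross hu hu0 hmean
    _ _ _ hlam hlam_u hgrad _ _ _ _ _ _ hμ => ?_⟩
  have hΩ : IsThinConvex ε Ω := .of_mkPt_mem hopen hconv hslab hcross
  obtain ⟨hlow, hup⟩ := H ε Ω u hεε₀ hΩ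
    (.of_contDiffOn hopen (by simp) hu
      fun z hz => (hgrad z hz).trans_eq (mul_right_comm _ _ _)) hu0 hmean
  exact ⟨hlam.trans_le (hlow.trans_eq hμ.symm), hμ.trans_le (hlam_u ▸ hup)⟩
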